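/- arXiv:1304.4921 — 6 statements merged into one kernel-verified Lean document; each statement's English description precedes it below -/
import Mathlib

section
/- There exist absolute constants C, c > 0 such that the following holds. For every ε ∈ (0,1], set δ = 1 / tower(⌈C·log(1/ε)⌉ + c). Then for every n ∈ ℕ, with N = 2ⁿ, every subset A ⊆ 𝔽₂ⁿ that is ε-far from being triangle-free contains at least δ·N² triangles, i.e. at least δ·N² triples (x,y,z) ∈ A³ with x+y+z = 0. -/
open scoped Classical BigOperators

noncomputable section

/-- The group `G = 𝔽₂ⁿ`. -/
abbrev G (n : ℕ) : Type := Fin n → ZMod 2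

/-- The coset `H + g` (note that `-g = g` in `𝔽₂ⁿ`). -/
def coset {n : ℕ} (H : AddSubgroup (G n)) (g : G n) : Set (G n) := {x | x + g ∈ H}

/-- The entropy function `f(x) = x log x` (with `f 0 = 0`). -/
def ent (x : ℝ) : ℝ := x * Real.log x

/-- The density of `A` on the coset `H + g`. -/
def dens {n : ℕ} (A : Set (G n)) (H : AddSubgroup (G n)) (g : G n) : ℝ :=
  (Nat.card ↥(A ∩ coset H g) : ℝ) / (Nat.card ↥H : ℝ)

/-- Mean entropy `F_A(G, H)` of partitioning `G` into cosets of `H`. -/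
def meanEntG {n : ℕ} (A : Set (G n)) (H : AddSubgroup (G n)) : ℝ :=
  (∑ g : G n, ent (dens A H g)) / (Fintype.card (G n) : ℝ)

/-- Mean entropy `F_A(H + g, H')` of partitioning the coset `H + g` into cosets of `H'`. -/
def meanEntCoset {n : ℕ} (A : Set (G n)) (H H' : AddSubgroup (G n)) (g : G n) : ℝ :=
  (∑ g₁ : ↥H, ent (dens A H' (g + ↑g₁))) / (Nat.card ↥H : ℝ)

/-- The standard bilinear form on `𝔽₂ⁿ`. -/
def dotp {n : ℕ} (x y : G n) : ZMod 2 := ∑ i, x i * y i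

/-- The character value `(-1)^{⟨x, y⟩}`. -/
def chi {n : ℕ} (x y : G n) : ℝ := if dotp x y = 0 then 1 else -1

/-- Fourier coefficient `f̂_H^g(η) = E_{x ∈ H} [f(x + g) · (-1)^{⟨x, η⟩}]`. -/
def fCoeff {n : ℕ} (H : AddSubgroup (G n)) (g : G n) (f : G n → ℝ) (η : G n) : ℝ :=
  (∑ x : ↥H, f (↑x + g) * chi ↑x η) / (Nat.card ↥H : ℝ)

/-- `f` is `ρ`-superregular on `H + g`: every Fourier coefficient at a character that is
nontrivial on `H` is at most `ρ` times the zeroth coefficient in absolute value. -/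
def SuperregularOn {n : ℕ} (H : AddSubgroup (G n)) (g : G n) (ρ : ℝ) (f : G n → ℝ) : Prop :=
  ∀ η : G n, (∃ x ∈ H, dotp x η ≠ 0) →
    |fCoeff H g f η| ≤ ρ * fCoeff H g f 0

/-- `H'` `(α, β, k)`-shatters `A` on `H + g`. -/
def Shatters {n : ℕ} (H' H : AddSubgroup (G n)) (A : Set (G n)) (g : G n)
    (α β k : ℝ) : Prop :=
  (Nat.card ↥H : ℝ) / (Nat.card ↥H' : ℝ) ≤ (2 : ℝ) ^ k ∧
  α ≤ (Nat.card {g' : ↥H //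
        (Nat.card ↥(A ∩ coset H' (g + ↑g')) : ℝ) ≤ β * dens A H g * (Nat.card ↥H' : ℝ)} : ℝ) /
      (Nat.card ↥H : ℝ)

/-- Number of triangles `(a, b, c)`, `a + b + c = 0`, with `a ∈ S₁`, `b ∈ S₂`, `c ∈ S₃`. -/
def triBetween {n : ℕ} (S₁ S₂ S₃ : Set (G n)) : ℕ :=
  Nat.card {p : G n × G n × G n // p.1 ∈ S₁ ∧ p.2.1 ∈ S₂ ∧ p.2.2 ∈ S₃ ∧ p.1 + p.2.1 + p.2.2 = 0}

/-- Number of triangles in `A`. -/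
def triCount {n : ℕ} (A : Set (G n)) : ℕ := triBetween A A A

/-- The annihilator of `K`: characters trivial on `K`. -/
def ann {n : ℕ} (K : AddSubgroup (G n)) : AddSubgroup (G n) where
  carrier := {η | ∀ x ∈ K, dotp x η = 0}
  zero_mem' := by intro x _; simp [dotp]
  add_mem' := by
    intro a b ha hb x hx
    have h : dotp x (a + b) = dotp x a + dotp x b := by
      simp [dotp, mul_add, Finset.sum_add_distrib]
    rw [h, ha x hx, hb x hx, add_zero]
  neg_mem' := by
    intro a ha x hx
    have h : dotp x (-a) = -dotp x a := by
      simp [dotp]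
    rw [h, ha x hx, neg_zero]

/-- Average of `f` over the coset `v + H'`. -/
def fbar {n : ℕ} (H' : AddSubgroup (G n)) (f : G n → ℝ) (v : G n) : ℝ :=
  (∑ y : ↥H', f (v + ↑y)) / (Nat.card ↥H' : ℝ)

/-- Tower function: `tower 0 = 1`, `tower (i+1) = 2 ^ tower i`. -/
def tower : ℕ → ℕ
  | 0 => 1
  | k + 1 => 2 ^ tower k

/-- `A` is `ε`-far from triangle-free: at least `ε N` elements must be removed from `A`
to destroy all triangles. -/
def FarFromTriangleFree {n : ℕ} (A : Set (G n)) (ε : ℝ) : Prop :=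
  ∀ B ⊆ A, (∀ x ∈ B, ∀ y ∈ B, ∀ z ∈ B, x + y + z ≠ 0) →
    ε * 2 ^ n ≤ (Nat.card ↥(A \ B) : ℝ)

/-- The set of elements of a triangle. -/
def elems {n : ℕ} (p : G n × G n × G n) : Set (G n) := {p.1, p.2.1, p.2.2}

lemma add_self_G {n : ℕ} (x : G n) : x + x = 0 := by
  ext t
  have : ∀ y : ZMod 2, y + y = 0 := by decide
  exact this _

lemma exists_large_support {ι : Type} [Fintype ι] (W : Submodule (ZMod 2) (ι → ZMod 2)) :
    ∃ h ∈ W, Module.finrank (ZMod 2) W ≤ Fintype.card {i // h i ≠ 0} := by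
  obtain ⟨h, hmax⟩ := Finite.exists_max (fun h : W => Fintype.card {i // (h : ι → ZMod 2) i ≠ 0})
  refine ⟨h, h.2, ?_⟩
  by_contra hlt
  push Not at hlt
  let L : W →ₗ[ZMod 2] ({i // (h : ι → ZMod 2) i ≠ 0} → ZMod 2) :=
    (LinearMap.funLeft (ZMod 2) (ZMod 2) Subtype.val).comp W.subtype
  have hker : LinearMap.ker L ≠ ⊥ := by
    apply LinearMap.ker_ne_bot_of_finrank_lt
    simpa using hlt
  obtain ⟨g, hg, hg0⟩ := Submodule.exists_mem_ne_zero_of_ne_bot hker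
  have hgz : ∀ i, (h : ι → ZMod 2) i ≠ 0 → (g : ι → ZMod 2) i = 0 := by
    intro i hi
    exact congrFun (LinearMap.mem_ker.1 hg) ⟨i, hi⟩
  have : ∃ i, (g : ι → ZMod 2) i ≠ 0 := by
    by_contra hc
    push Not at hc
    apply hg0
    ext i
    exact hc i
  obtain ⟨i₀, hi₀⟩ := this
  have := hmax (h + g)
  apply absurd this
  rw [not_le, Fintype.card_subtype, Fintype.card_subtype]
  apply Finset.card_lt_card
  rw [Finset.ssubset_iff_of_subset]
  · refine ⟨i₀, ?_, ?_⟩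
    · have : (h : ι → ZMod 2) i₀ = 0 := by
        by_contra hc
        exact hi₀ (hgz _ hc)
      simp [this, hi₀]
    · have : (h : ι → ZMod 2) i₀ = 0 := by
        by_contra hc
        exact hi₀ (hgz _ hc)
      simp [this]
  · intro i hi
    simp only [Finset.mem_filter, Finset.mem_univ, true_and] at hi ⊢
    simp [hgz i hi, hi]

lemma slice_bound {ι α : Type} [Fintype ι] [Fintype α]
    (f1 f2 f3 : α → ι → ZMod 2) (g1 g2 g3 : α → ι → ι → ZMod 2)
    (H : ∀ i j k, (if i = j ∧ j = k then (1 : ZMod 2) else 0) =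
      ∑ a, f1 a i * g1 a j k + ∑ a, f2 a j * g2 a i k + ∑ a, f3 a k * g3 a i j) :
    Fintype.card ι ≤ 3 * Fintype.card α := by
  let L : (ι → ZMod 2) →ₗ[ZMod 2] (α → ZMod 2) := Matrix.mulVecLin (Matrix.of f3)
  obtain ⟨h, hW, hs⟩ := exists_large_support (LinearMap.ker L)
  have h1 := LinearMap.finrank_range_add_finrank_ker L
  have h2 : Module.finrank (ZMod 2) (LinearMap.range L) ≤ Fintype.card α := by
    simpa using Submodule.finrank_le (LinearMap.range L)
  simp only [Module.finrank_fintype_fun_eq_card] at h1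
  have hz : ∀ a, ∑ k, f3 a k * h k = 0 := by
    intro a
    exact congrFun (LinearMap.mem_ker.1 hW) a
  have hM : Matrix.diagonal h =
      (Matrix.of fun i a => f1 a i) * (Matrix.of fun a j => ∑ k, h k * g1 a j k) +
      (Matrix.of fun i a => ∑ k, h k * g2 a i k) * (Matrix.of fun a j => f2 a j) := by
    ext i j
    have e1 : Matrix.diagonal h i j = ∑ k, h k * (if i = j ∧ j = k then (1 : ZMod 2) else 0) := by
      by_cases hij : i = j
      · subst hij; simp
      · simp [hij]
    rw [e1]
    simp only [H, mul_add, Finset.sum_add_distrib, Matrix.add_apply, Matrix.mul_apply,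
      Matrix.of_apply, Finset.mul_sum, Finset.sum_mul]
    have e2 : ∑ k, ∑ a, h k * (f3 a k * g3 a i j) = 0 := by
      rw [Finset.sum_comm]
      apply Finset.sum_eq_zero
      intro a _
      have := congrArg (· * g3 a i j) (hz a)
      simp only [Finset.sum_mul, zero_mul] at this
      rw [← this]
      apply Finset.sum_congr rfl
      intros; ring
    rw [e2, add_zero, Finset.sum_comm]
    congr 1
    · apply Finset.sum_congr rfl
      intros; apply Finset.sum_congr rfl
      intros; ring
    · rw [Finset.sum_comm]
      apply Finset.sum_congr rfl
      intros; apply Finset.sum_congr rfl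
      intros; ring
  have h3 := Matrix.rank_diagonal h
  rw [hM, ← Matrix.fromCols_mul_fromRows] at h3
  have h5 := (Matrix.rank_mul_le_left (Matrix.fromCols (Matrix.of fun i a => f1 a i) (Matrix.of fun i a => ∑ k, h k * g2 a i k)) (Matrix.fromRows (Matrix.of fun a j => ∑ k, h k * g1 a j k) (Matrix.of fun a j => f2 a j))).trans (Matrix.rank_le_card_width _)
  rw [Fintype.card_sum] at h5
  have h7 : Fintype.card {i // h i ≠ 0} ≤ Fintype.card α + Fintype.card α := by
    convert (h3.symm.le.trans h5)
  omega

lemma prod_ind {d : ℕ} (s : G d) :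
    (∏ t, (1 + s t)) = if s = 0 then (1 : ZMod 2) else 0 := by
  split_ifs with h
  · simp [h]
  · obtain ⟨t, ht⟩ := Function.ne_iff.1 h
    apply Finset.prod_eq_zero (Finset.mem_univ t)
    have : ∀ x : ZMod 2, x ≠ 0 → 1 + x = 0 := by decide
    exact this _ ht

def col {d : ℕ} (χ : Fin d → Fin 4) (c : Fin 4) : Finset (Fin d) := Finset.univ.filter (fun t => χ t = c)

lemma prod_expand {d : ℕ} (u v w : G d) :
    (∏ t, (1 + (u + v + w) t)) = ∑ χ : Fin d → Fin 4,
      (∏ t ∈ col χ 1, u t) * (∏ t ∈ col χ 2, v t) * (∏ t ∈ col χ 3, w t) := by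
  have h1 : ∀ t, 1 + (u + v + w) t = ∑ c : Fin 4, (![1, u t, v t, w t] : Fin 4 → ZMod 2) c := by
    intro t
    simp [Fin.sum_univ_four]; ring
  simp_rw [h1]
  rw [Finset.prod_univ_sum]
  rw [Fintype.piFinset_univ]
  apply Finset.sum_congr rfl
  intro χ _
  simp only [col, Finset.prod_filter]
  rw [← Finset.prod_mul_distrib, ← Finset.prod_mul_distrib]
  apply Finset.prod_congr rfl
  intro t _
  generalize χ t = c
  fin_cases c <;> simp

lemma col_card {e : ℕ} (χ : Fin (3 * e) → Fin 4) (h1 : ¬ (col χ 1).card ≤ e) (h2 : ¬ (col χ 2).card ≤ e) :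
    (col χ 3).card ≤ e := by
  have := Finset.card_eq_sum_card_fiberwise (f := χ) (s := Finset.univ) (t := Finset.univ) (by simp)
  simp [Fin.sum_univ_four] at this
  simp only [col] at *
  omega

lemma sum_slice {d e : ℕ} (P : (Fin d → Fin 4) → Prop) (c : Fin 4)
    (hP : ∀ χ, P χ → (col χ c).card ≤ e) (u : G d) (R : (Fin d → Fin 4) → ZMod 2) :
    ∑ χ with P χ, (∏ t ∈ col χ c, u t) * R χ =
    ∑ I : {I : Finset (Fin d) // I.card ≤ e}, (∏ t ∈ I.1, u t) *
      ∑ χ with P χ ∧ col χ c = I.1, R χ := by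
  simp_rw [Finset.mul_sum, Finset.sum_filter]
  rw [Finset.sum_comm]
  apply Finset.sum_congr rfl
  intro χ _
  by_cases h : P χ
  · rw [Finset.sum_eq_single ⟨col χ c, hP χ h⟩]
    · simp [h]
    · intro b _ hb
      rw [if_neg]
      rintro ⟨_, h2⟩
      exact hb (Subtype.ext h2.symm)
    · simp
  · simp [h]

def P1 {e : ℕ} (χ : Fin (3 * e) → Fin 4) : Prop := (col χ 1).card ≤ e
def P2 {e : ℕ} (χ : Fin (3 * e) → Fin 4) : Prop := ¬ (col χ 1).card ≤ e ∧ (col χ 2).card ≤ e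
def P3 {e : ℕ} (χ : Fin (3 * e) → Fin 4) : Prop := ¬ (col χ 1).card ≤ e ∧ ¬ (col χ 2).card ≤ e

lemma sumfree_bound {e : ℕ} (S : Finset (G (3 * e) × G (3 * e)))
    (h : ∀ p ∈ S, ∀ q ∈ S, ∀ r ∈ S, p.1 + q.2 + (r.1 + r.2) = 0 → p = q ∧ q = r) :
    S.card ≤ 3 * Fintype.card {I : Finset (Fin (3 * e)) // I.card ≤ e} := by
  have hS : S.card = Fintype.card S := by simp
  rw [hS]
  let R : {I : Finset (Fin (3 * e)) // I.card ≤ e} → G (3 * e) → ZMod 2 := fun I u => ∏ t ∈ I.1, u t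
  apply slice_bound (fun I i => R I i.1.1) (fun I j => R I j.1.2) (fun I k => R I (k.1.1 + k.1.2))
    (fun I j k => ∑ χ with P1 χ ∧ col χ 1 = I.1, (∏ t ∈ col χ 2, j.1.2 t) * (∏ t ∈ col χ 3, (k.1.1 + k.1.2) t))
    (fun I i k => ∑ χ with P2 χ ∧ col χ 2 = I.1, (∏ t ∈ col χ 1, i.1.1 t) * (∏ t ∈ col χ 3, (k.1.1 + k.1.2) t))
    (fun I i j => ∑ χ with P3 χ ∧ col χ 3 = I.1, (∏ t ∈ col χ 1, i.1.1 t) * (∏ t ∈ col χ 2, j.1.2 t))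
  intro i j k
  have e1 : (i = j ∧ j = k) ↔ i.1.1 + j.1.2 + (k.1.1 + k.1.2) = 0 := by
    constructor
    · rintro ⟨rfl, rfl⟩
      exact add_self_G _
    · intro h0
      have := h _ i.2 _ j.2 _ k.2 h0
      exact ⟨Subtype.ext this.1, Subtype.ext this.2⟩
  trans (if i.1.1 + j.1.2 + (k.1.1 + k.1.2) = 0 then (1 : ZMod 2) else 0)
  · simp only [e1]
  rw [← prod_ind, prod_expand]
  simp only [R]
  rw [← sum_slice P1 1 (fun χ h => h), ← sum_slice P2 2 (fun χ h => h.2),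
    ← sum_slice P3 3 (fun χ h => col_card χ h.1 h.2)]
  simp only [Finset.sum_filter]
  rw [← Finset.sum_add_distrib, ← Finset.sum_add_distrib]
  apply Finset.sum_congr rfl
  intro χ _
  by_cases q1 : (col χ 1).card ≤ e <;> by_cases q2 : (col χ 2).card ≤ e <;> simp [P1, P2, P3, q1, q2] <;> ring

lemma count_bound (e : ℕ) :
    (Fintype.card {I : Finset (Fin (3 * e)) // I.card ≤ e} : ℝ) ≤ (27 / 4) ^ e := by
  rw [Fintype.card_subtype, Finset.card_eq_sum_ones]
  push_cast
  calc (∑ I : Finset (Fin (3*e)) with I.card ≤ e, (1:ℝ))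
      ≤ ∑ I : Finset (Fin (3*e)) with I.card ≤ e, (2:ℝ)^e * ((1/2:ℝ) ^ I.card * 1 ^ (3 * e - I.card)) := by
        apply Finset.sum_le_sum
        intro I hI
        simp only [Finset.mem_filter, Finset.mem_univ, true_and] at hI
        rw [one_pow, mul_one, one_div, inv_pow, ← div_eq_mul_inv, one_le_div (by positivity)]
        exact pow_le_pow_right₀ (by norm_num) hI
    _ ≤ ∑ I : Finset (Fin (3*e)), (2:ℝ)^e * ((1/2:ℝ) ^ I.card * 1 ^ (3 * e - I.card)) := by
        apply Finset.sum_le_univ_sum_of_nonneg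
        intro I; positivity
    _ = 2 ^ e * (3/2) ^ (3 * e) := by
        rw [← Finset.mul_sum]
        have := Finset.sum_pow_mul_eq_add_pow (1/2:ℝ) 1 (Finset.univ : Finset (Fin (3*e)))
        simp only [Finset.powerset_univ, Finset.card_univ, Fintype.card_fin] at this
        rw [this]; norm_num
    _ = (27/4)^e := by
        rw [pow_mul, ← mul_pow]; norm_num
    _ ≤ _ := le_rfl

lemma sum_surj {P Q : Type} [AddCommGroup P] [AddCommGroup Q] [Fintype P] [Fintype Q]
    (f : P →+ Q) (hf : Function.Surjective f) (F : Q → ℝ) :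
    (Fintype.card Q : ℝ) * ∑ p, F (f p) = Fintype.card P * ∑ q, F q := by
  have h1 : ∀ q, ∑ p, F (f p) = ∑ p, F (f p + q) := by
    intro q
    obtain ⟨p0, rfl⟩ := hf q
    rw [← Equiv.sum_comp (Equiv.addRight p0)]
    simp
  have h2 : ∑ _q : Q, ∑ p, F (f p) = ∑ q : Q, ∑ p, F (f p + q) :=
    Finset.sum_congr rfl fun q _ => h1 q
  conv at h2 => rhs; rw [Finset.sum_comm]
  have h3 : ∀ p, ∑ q, F (f p + q) = ∑ q, F q := fun p =>
    Equiv.sum_comp (Equiv.addLeft (f p)) F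
  simp only [h3] at h2
  simpa using h2

def tri {n : ℕ} (A : Finset (G n)) (x y : G n) : Prop := x ∈ A ∧ y ∈ A ∧ x + y ∈ A

def ind {n : ℕ} (A : Finset (G n)) (x y : G n) : ℝ := if tri A x y then 1 else 0

def deg {n : ℕ} (A : Finset (G n)) (x : G n) : ℝ := ∑ y, ind A x y

def TT {n : ℕ} (A : Finset (G n)) : ℝ := ∑ x, deg A x

lemma ind_nonneg {n : ℕ} (A : Finset (G n)) (x y : G n) : 0 ≤ ind A x y := by
  unfold ind; split_ifs <;> norm_num

lemma ind_comm {n : ℕ} (A : Finset (G n)) (x y : G n) : ind A x y = ind A y x := by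
  unfold ind tri
  rw [add_comm x y]
  congr 1
  apply propext; tauto

lemma add_add_G {n : ℕ} (x y : G n) : x + (x + y) = y := by
  rw [← add_assoc, add_self_G, zero_add]

lemma ind_add {n : ℕ} (A : Finset (G n)) (x y : G n) : ind A (x + y) x = ind A x y := by
  unfold ind tri
  rw [show x + y + x = y by rw [add_comm (x+y), add_add_G]]
  congr 1
  apply propext; tauto

/-- the linear map attached to a tuple of vectors -/
def phi {d n : ℕ} (M : Fin d → G n) (u : G d) : G n := ∑ i, u i • M i

lemma phi_add {d n : ℕ} (M : Fin d → G n) (u v : G d) : phi M (u + v) = phi M u + phi M v := by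
  simp [phi, add_smul, Finset.sum_add_distrib]

abbrev Om (d n : ℕ) : Type := (Fin d → G n) × G n × G n

def map3 {d n : ℕ} (u v s : G d) : Om d n →+ G n × G n × G n where
  toFun ω := (phi ω.1 u + ω.2.1, phi ω.1 v + ω.2.2, phi ω.1 s)
  map_zero' := by simp [phi]
  map_add' := by
    intro a b
    simp only [phi, Prod.fst_add, Prod.snd_add, Pi.add_apply, smul_add, Finset.sum_add_distrib,
      Prod.mk_add_mk, Prod.mk.injEq, and_true]
    constructor <;> abel

lemma map3_surj {d n : ℕ} (u v s : G d) (hs : s ≠ 0) :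
    Function.Surjective (map3 (n := n) u v s) := by
  rintro ⟨x, y, z⟩
  obtain ⟨i, hi⟩ := Function.ne_iff.1 hs
  have hi1 : s i = 1 := by
    have : ∀ x : ZMod 2, x ≠ 0 → x = 1 := by decide
    exact this _ hi
  let M : Fin d → G n := Pi.single i z
  have hM : phi M s = z := by
    unfold phi
    rw [Finset.sum_eq_single i]
    · simp [M, hi1]
    · intro b _ hb
      simp [M, hb]
    · simp
  refine ⟨(M, x - phi M u, y - phi M v), ?_⟩
  simp [map3, hM]

def map2 {d n : ℕ} (u v : G d) : Om d n →+ G n × G n where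
  toFun ω := (phi ω.1 u + ω.2.1, phi ω.1 v + ω.2.2)
  map_zero' := by simp [phi]
  map_add' := by
    intro a b
    simp only [phi, Prod.fst_add, Prod.snd_add, Pi.add_apply, smul_add, Finset.sum_add_distrib,
      Prod.mk_add_mk, Prod.mk.injEq]
    constructor <;> abel

lemma map2_surj {d n : ℕ} (u v : G d) :
    Function.Surjective (map2 (n := n) u v) := by
  rintro ⟨x, y⟩
  refine ⟨(0, x, y), ?_⟩
  simp [map2, phi]

/-- pulled back triangle indicator -/
def E {d n : ℕ} (A : Finset (G n)) (ω : Om d n) (u v : G d) : ℝ :=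
  ind A (phi ω.1 u + ω.2.1) (phi ω.1 v + ω.2.2)

def iso {d n : ℕ} (A : Finset (G n)) (ω : Om d n) : Finset (G d × G d) :=
  Finset.univ.filter fun p => E A ω p.1 p.2 = 1 ∧ ∀ s, s ≠ 0 →
    E A ω p.1 (p.2 + s) = 0 ∧ E A ω (p.1 + s) p.2 = 0 ∧ E A ω (p.1 + s) (p.2 + s) = 0

lemma E_cases {d n : ℕ} (A : Finset (G n)) (ω : Om d n) (u v : G d) :
    E A ω u v = 0 ∨ E A ω u v = 1 := by
  unfold E ind; split_ifs <;> simp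

lemma E_nonneg {d n : ℕ} (A : Finset (G n)) (ω : Om d n) (u v : G d) : 0 ≤ E A ω u v :=
  ind_nonneg _ _ _

lemma iso_lower {d n : ℕ} (A : Finset (G n)) (ω : Om d n) :
    ∑ u, ∑ v, (E A ω u v - ∑ s with s ≠ 0, (E A ω u v * E A ω u (v + s) + E A ω u v * E A ω (u + s) v
      + E A ω u v * E A ω (u + s) (v + s))) ≤ (iso A ω).card := by
  rw [← Fintype.sum_prod_type', iso, Finset.card_filter]
  push_cast
  apply Finset.sum_le_sum
  rintro ⟨u, v⟩ _
  have hnn : ∀ s, 0 ≤ E A ω u v * E A ω u (v + s) + E A ω u v * E A ω (u + s) v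
      + E A ω u v * E A ω (u + s) (v + s) := by
    intro s
    have h1 := E_nonneg A ω
    have := mul_nonneg (h1 u v) (h1 u (v+s))
    have := mul_nonneg (h1 u v) (h1 (u+s) v)
    have := mul_nonneg (h1 u v) (h1 (u+s) (v+s))
    linarith
  have hsn := Finset.sum_nonneg (s := Finset.univ.filter (fun s : G d => s ≠ 0)) (fun s _ => hnn s)
  split_ifs with h
  · rw [h.1] at hsn ⊢
    linarith
  · rcases E_cases A ω u v with h0 | h1
    · rw [h0] at hsn ⊢; linarith
    · rw [not_and] at h
      have h := h h1
      push Not at h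
      obtain ⟨s, hs, hh⟩ := h
      have : (1:ℝ) ≤ E A ω u v * E A ω u (v + s) + E A ω u v * E A ω (u + s) v
          + E A ω u v * E A ω (u + s) (v + s) := by
        rw [h1]
        rcases E_cases A ω u (v+s) with a0 | a1 <;> rcases E_cases A ω (u+s) v with b0 | b1 <;>
          rcases E_cases A ω (u+s) (v+s) with c0 | c1 <;> simp_all
      have h2 := Finset.single_le_sum (f := fun s => E A ω u v * E A ω u (v + s) + E A ω u v * E A ω (u + s) v
          + E A ω u v * E A ω (u + s) (v + s)) (fun s _ => hnn s) (show s ∈ Finset.univ.filter (fun s : G d => s ≠ 0) by simp [hs])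
      linarith

lemma E_eq_one {d n : ℕ} (A : Finset (G n)) (ω : Om d n) (u v : G d) :
    E A ω u v = 1 ↔ phi ω.1 u + ω.2.1 ∈ A ∧ phi ω.1 v + ω.2.2 ∈ A ∧
      phi ω.1 (u + v) + (ω.2.1 + ω.2.2) ∈ A := by
  unfold E ind tri
  rw [phi_add, show phi ω.1 u + ω.2.1 + (phi ω.1 v + ω.2.2) = phi ω.1 u + phi ω.1 v + (ω.2.1 + ω.2.2) by abel]
  split_ifs with h <;> simp [h]

lemma eq_of_add_zero_G {n : ℕ} {x y : G n} (h : x + y = 0) : x = y := by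
  have := add_add_G x y
  rw [h, add_zero] at this
  exact this

lemma iso_sumfree {d n : ℕ} (A : Finset (G n)) (ω : Om d n) :
    ∀ p ∈ iso A ω, ∀ q ∈ iso A ω, ∀ r ∈ iso A ω, p.1 + q.2 + (r.1 + r.2) = 0 → p = q ∧ q = r := by
  rintro ⟨p1, p2⟩ hp ⟨q1, q2⟩ hq ⟨r1, r2⟩ hr h
  simp only [iso, Finset.mem_filter, Finset.mem_univ, true_and] at hp hq hr h
  have hsum : p1 + q2 = r1 + r2 := eq_of_add_zero_G h
  have hE : E A ω p1 q2 = 1 := by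
    rw [E_eq_one]
    refine ⟨((E_eq_one _ _ _ _).1 hp.1).1, ((E_eq_one _ _ _ _).1 hq.1).2.1, ?_⟩
    rw [hsum]
    exact ((E_eq_one _ _ _ _).1 hr.1).2.2
  have e1 : p2 = q2 := by
    by_contra hne
    have := (hp.2 (p2 + q2) (fun h => hne (eq_of_add_zero_G h))).1
    rw [add_add_G, hE] at this
    norm_num at this
  have e2 : q1 = p1 := by
    by_contra hne
    have := (hq.2 (q1 + p1) (fun h => hne (eq_of_add_zero_G h))).2.1
    rw [add_add_G, hE] at this
    norm_num at this
  have e3 : r1 = p1 := by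
    by_contra hne
    have := (hr.2 (r1 + p1) (fun h => hne (eq_of_add_zero_G h))).2.2
    rw [add_add_G, show r2 + (r1 + p1) = q2 by
      rw [← add_assoc, add_comm r2 r1, ← hsum, add_comm, add_add_G], hE] at this
    norm_num at this
  subst e1 e2 e3
  have e4 : p2 = r2 := add_left_cancel hsum
  subst e4
  exact ⟨rfl, rfl⟩

lemma card_G (n : ℕ) : (Fintype.card (G n) : ℝ) = 2 ^ n := by
  simp [G, ZMod.card]

lemma sum_E {d n : ℕ} (A : Finset (G n)) (u v : G d) :
    ((2:ℝ) ^ n) ^ 2 * ∑ ω : Om d n, E A ω u v = Fintype.card (Om d n) * TT A := by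
  have := sum_surj (map2 (n := n) u v) (map2_surj u v) (fun q => ind A q.1 q.2)
  rw [Fintype.card_prod, Fintype.sum_prod_type (α₁ := G n)] at this
  push_cast [card_G] at this
  rw [sq]
  exact this

lemma deg_sum_bound {n : ℕ} (A : Finset (G n)) (D : ℝ) (hD : ∀ x ∈ A, deg A x ≤ D) (x y w : G n)
    (hw : tri A x y → w ∈ A) : ind A x y * deg A w ≤ ind A x y * D := by
  unfold ind
  split_ifs with h
  · simpa using hD w (hw h)
  · simp

lemma sum_EE {d n : ℕ} (A : Finset (G n)) (D : ℝ) (hD : ∀ x ∈ A, deg A x ≤ D) (u v s : G d) (hs : s ≠ 0) :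
    ((2:ℝ) ^ n) ^ 3 * ∑ ω : Om d n, (E A ω u v * E A ω u (v + s) + E A ω u v * E A ω (u + s) v
      + E A ω u v * E A ω (u + s) (v + s)) ≤ Fintype.card (Om d n) * (3 * (TT A * D)) := by
  have := sum_surj (map3 (n := n) u v s) (map3_surj u v s hs) (fun q =>
    ind A q.1 q.2.1 * ind A q.1 (q.2.1 + q.2.2) + ind A q.1 q.2.1 * ind A (q.1 + q.2.2) q.2.1
    + ind A q.1 q.2.1 * ind A (q.1 + q.2.2) (q.2.1 + q.2.2))
  rw [Fintype.card_prod, Fintype.card_prod] at this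
  simp only [Nat.cast_mul, card_G] at this
  have hl : ∀ ω : Om d n, (E A ω u v * E A ω u (v + s) + E A ω u v * E A ω (u + s) v
      + E A ω u v * E A ω (u + s) (v + s)) =
      (fun q : G n × G n × G n =>
    ind A q.1 q.2.1 * ind A q.1 (q.2.1 + q.2.2) + ind A q.1 q.2.1 * ind A (q.1 + q.2.2) q.2.1
    + ind A q.1 q.2.1 * ind A (q.1 + q.2.2) (q.2.1 + q.2.2)) (map3 u v s ω) := by
    intro ω
    simp only [E, map3, AddMonoidHom.coe_mk, ZeroHom.coe_mk, phi_add]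
    rw [add_right_comm _ (phi ω.1 s), add_right_comm _ (phi ω.1 s)]
  rw [Finset.sum_congr rfl (fun ω _ => hl ω), pow_succ, sq, mul_assoc ((2:ℝ)^n), this]
  apply mul_le_mul_of_nonneg_left _ (by positivity)
  simp only [Fintype.sum_prod_type]
  have hT : 3 * (TT A * D) = ∑ x, ∑ y, 3 * (ind A x y * D) := by
    simp only [TT, deg, Finset.sum_mul, Finset.mul_sum]
  rw [hT]
  apply Finset.sum_le_sum; intro x _
  apply Finset.sum_le_sum; intro y _
  simp only [Finset.sum_add_distrib, ← Finset.mul_sum]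
  have a1 : ∑ z, ind A x (y + z) = deg A x := Equiv.sum_comp (Equiv.addLeft y) (ind A x)
  have a2 : ∑ z, ind A (x + z) y = deg A y := by
    simp_rw [ind_comm A _ y]
    exact Equiv.sum_comp (Equiv.addLeft x) (ind A y)
  have a3 : ∑ z, ind A (x + z) (y + z) = deg A (x + y) := by
    have : ∀ z, ind A (x + z) (y + z) = ind A (x + y) (x + z) := by
      intro z
      rw [← ind_add A (x+z) (y+z), show x + z + (y + z) = (x + y) + (z + z) by abel, add_self_G, add_zero]
    simp_rw [this]
    exact Equiv.sum_comp (Equiv.addLeft x) (ind A (x+y))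
  rw [a1, a2, a3]
  have b1 := deg_sum_bound A D hD x y x (fun h => h.1)
  have b2 := deg_sum_bound A D hD x y y (fun h => h.2.1)
  have b3 := deg_sum_bound A D hD x y (x+y) (fun h => h.2.2)
  linarith

lemma TT_nonneg {n : ℕ} (A : Finset (G n)) : 0 ≤ TT A :=
  Finset.sum_nonneg fun _ _ => Finset.sum_nonneg fun _ _ => ind_nonneg _ _ _

/-- Sampling lemma. -/
lemma sampling {d n : ℕ} (A : Finset (G n)) (D B : ℝ) (hD : ∀ x ∈ A, deg A x ≤ D)
    (hD2 : D * 2 ^ (d + 3) ≤ 2 ^ n)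
    (hB : ∀ S : Finset (G d × G d), (∀ p ∈ S, ∀ q ∈ S, ∀ r ∈ S, p.1 + q.2 + (r.1 + r.2) = 0 → p = q ∧ q = r)
      → (S.card : ℝ) ≤ B) :
    TT A * (2 ^ d) ^ 2 ≤ 2 * B * (2 ^ n) ^ 2 := by
  set N : ℝ := 2 ^ n with hN
  have hN0 : 0 < N := by positivity
  set W : ℝ := ((Fintype.card (Om d n) : ℕ) : ℝ) with hW
  have hW0 : 0 < W := by
    rw [hW]; exact_mod_cast Fintype.card_pos
  have h1 : ∑ ω : Om d n, ((iso A ω).card : ℝ) ≤ W * B := by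
    calc _ ≤ ∑ ω : Om d n, B := Finset.sum_le_sum fun ω _ => hB _ (iso_sumfree A ω)
      _ = _ := by simp [hW]
  have h2 := (Finset.sum_le_sum fun (ω : Om d n) (_ : ω ∈ Finset.univ) => iso_lower A ω).trans h1
  have h3 : ∑ ω : Om d n, ∑ u, ∑ v, (E A ω u v - ∑ s with s ≠ 0, (E A ω u v * E A ω u (v + s) + E A ω u v * E A ω (u + s) v
      + E A ω u v * E A ω (u + s) (v + s))) = ∑ u, ∑ v, (∑ ω : Om d n, E A ω u v - ∑ s with s ≠ 0, ∑ ω : Om d n, (E A ω u v * E A ω u (v + s) + E A ω u v * E A ω (u + s) v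
      + E A ω u v * E A ω (u + s) (v + s))) := by
    rw [Finset.sum_comm]
    apply Finset.sum_congr rfl; intro u _
    rw [Finset.sum_comm]
    apply Finset.sum_congr rfl; intro v _
    rw [Finset.sum_sub_distrib]
    congr 1
    rw [Finset.sum_comm]
  rw [h3] at h2
  have h4 : ∀ u v : G d, W * TT A / N ^ 2 - 2 ^ d * (W * (3 * (TT A * D)) / N ^ 3) ≤
      ∑ ω : Om d n, E A ω u v - ∑ s with s ≠ 0, ∑ ω : Om d n, (E A ω u v * E A ω u (v + s) + E A ω u v * E A ω (u + s) v
      + E A ω u v * E A ω (u + s) (v + s)) := by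
    intro u v
    apply sub_le_sub
    · rw [div_le_iff₀ (by positivity), mul_comm _ (N^2), sum_E]
    · have hD0 : 0 ≤ TT A * D := by
        by_cases hA : A.Nonempty
        · obtain ⟨x, hx⟩ := hA
          have : 0 ≤ D := le_trans (Finset.sum_nonneg fun _ _ => ind_nonneg _ _ _) (hD x hx)
          exact mul_nonneg (TT_nonneg A) this
        · rw [Finset.not_nonempty_iff_eq_empty] at hA
          simp [hA, TT, deg, ind, tri]
      calc _ ≤ ∑ s : G d with s ≠ 0, (W * (3 * (TT A * D)) / N ^ 3) := by
            apply Finset.sum_le_sum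
            intro s hs
            rw [le_div_iff₀ (by positivity), mul_comm _ (N^3)]
            exact sum_EE A D hD u v s (by simpa using hs)
        _ ≤ ∑ s : G d, (W * (3 * (TT A * D)) / N ^ 3) := by
            apply Finset.sum_le_univ_sum_of_nonneg
            intro s; positivity
        _ = _ := by simp
  have h5 := (Finset.sum_le_sum fun u (_ : u ∈ Finset.univ) => Finset.sum_le_sum fun v (_ : v ∈ Finset.univ) => h4 u v).trans h2
  simp only [Finset.sum_const, Finset.card_univ, nsmul_eq_mul, card_G] at h5
  set K : ℝ := 2 ^ d with hK
  have hK0 : 0 < K := by positivity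
  have hD3 : D * K * 8 ≤ N := by
    rw [pow_add] at hD2; linarith
  have h6 : W * TT A / N ^ 2 / 2 ≤ W * TT A / N ^ 2 - K * (W * (3 * (TT A * D)) / N ^ 3) := by
    have e : W * TT A / N ^ 2 - K * (W * (3 * (TT A * D)) / N ^ 3) = W * TT A / N ^ 2 * (1 - 3 * (D * K) / N) := by
      field_simp
    rw [e, div_eq_mul_inv _ (2:ℝ)]
    have := TT_nonneg A
    apply mul_le_mul_of_nonneg_left _ (by positivity)
    have : 3 * (D * K) / N ≤ 1/2 := by
      rw [div_le_iff₀ hN0]; linarith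
    linarith
  have h7 : K * (K * (W * TT A / N ^ 2 / 2)) ≤ W * B := by
    refine le_trans ?_ h5
    gcongr
  have h8 : K * (K * (W * TT A / N ^ 2 / 2)) = W * (TT A * K ^ 2 / (2 * N ^ 2)) := by
    field_simp
  rw [h8] at h7
  have h9 := le_of_mul_le_mul_left h7 hW0
  rw [div_le_iff₀ (by positivity)] at h9
  linarith

lemma markov {n : ℕ} (A : Finset (G n)) (D : ℝ) :
    ((A \ A.filter (fun x => deg A x ≤ D)).card : ℝ) * D ≤ TT A := by
  calc ((A \ A.filter (fun x => deg A x ≤ D)).card : ℝ) * D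
      = ∑ x ∈ A \ A.filter (fun x => deg A x ≤ D), D := by simp
    _ ≤ ∑ x ∈ A \ A.filter (fun x => deg A x ≤ D), deg A x := by
        apply Finset.sum_le_sum
        intro x hx
        simp only [Finset.mem_sdiff, Finset.mem_filter, not_and, not_le] at hx
        exact (hx.2 hx.1).le
    _ ≤ TT A := by
        apply Finset.sum_le_univ_sum_of_nonneg
        intro x
        exact Finset.sum_nonneg fun _ _ => ind_nonneg _ _ _

lemma deg_mono {n : ℕ} {A B : Finset (G n)} (h : B ⊆ A) (x : G n) : deg B x ≤ deg A x := by
  apply Finset.sum_le_sum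
  intro y _
  unfold ind
  split_ifs with h1 h2 h2
  · exact le_rfl
  · exact absurd ⟨h h1.1, h h1.2.1, h h1.2.2⟩ h2
  · norm_num
  · exact le_rfl

lemma iterate (n k : ℕ) : ∀ e, n < 3 * e + 3 + k → ∀ A : Finset (G n),
    (∀ x ∈ A, deg A x ≤ 2 ^ n / 2 ^ (3 * e + 3)) →
    ∃ B ⊆ A, (∀ x y, ¬ tri B x y) ∧ ((A \ B).card : ℝ) ≤ 2458 * (27 / 32) ^ e * 2 ^ n := by
  induction k with
  | zero =>
    intro e he A hA
    refine ⟨A, subset_rfl, ?_, ?_⟩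
    · intro x y h
      have h1 := hA x h.1
      have h2 : ind A x y ≤ deg A x := Finset.single_le_sum (f := ind A x) (fun y _ => ind_nonneg A x y) (Finset.mem_univ y)
      have h3 : ind A x y = 1 := by simp [ind, h]
      have h4 : (2:ℝ) ^ n / 2 ^ (3 * e + 3) < 1 := by
        rw [div_lt_one (by positivity)]
        exact pow_lt_pow_right₀ (by norm_num) (by omega)
      linarith
    · simp only [sdiff_self, Finset.bot_eq_empty, Finset.card_empty, Nat.cast_zero]
      positivity
  | succ k ih =>
    intro e he A hA
    have hs := sampling (d := 3 * e) A (2 ^ n / 2 ^ (3 * e + 3)) (3 * (27 / 4) ^ e) hA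
      (by rw [div_mul_cancel₀]; positivity)
      (by
        intro S hS
        have h1 := sumfree_bound S hS
        have h2 : (S.card : ℝ) ≤ 3 * (Fintype.card {I : Finset (Fin (3 * e)) // I.card ≤ e} : ℝ) := by
          exact_mod_cast h1
        have := count_bound e
        linarith)
    have hm := markov A (2 ^ n / 2 ^ (3 * (e + 1) + 3))
    set A' := A.filter (fun x => deg A x ≤ 2 ^ n / 2 ^ (3 * (e + 1) + 3)) with hA'
    have hsub : A' ⊆ A := Finset.filter_subset _ _
    obtain ⟨B, hBA, hB, hc⟩ := ih (e + 1) (by omega) A' (by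
      intro x hx
      exact (deg_mono hsub x).trans (Finset.mem_filter.1 hx).2)
    refine ⟨B, hBA.trans hsub, hB, ?_⟩
    have hcard : ((A \ B).card : ℝ) ≤ ((A \ A').card : ℝ) + ((A' \ B).card : ℝ) := by
      have : A \ B ⊆ (A \ A') ∪ (A' \ B) := by
        intro x hx
        simp only [Finset.mem_union, Finset.mem_sdiff] at hx ⊢
        tauto
      exact_mod_cast (Finset.card_le_card this).trans (Finset.card_union_le _ _)
    have hN : (0:ℝ) < 2 ^ n := by positivity
    have hX : (0:ℝ) < 8 ^ e := by positivity
    have p1 : (2:ℝ) ^ (3 * (e + 1) + 3) = 64 * 8 ^ e := by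
      rw [show 3 * (e + 1) + 3 = 3 * e + 6 by ring, pow_add, pow_mul]; norm_num; ring
    have p2 : (2:ℝ) ^ (3 * e) = 8 ^ e := by
      rw [pow_mul]; norm_num
    have p3 : ((27:ℝ)/4) ^ e = (27/32) ^ e * 8 ^ e := by
      rw [← mul_pow]; norm_num
    rw [p1] at hm
    rw [p2, p3] at hs
    set N : ℝ := 2 ^ n
    set X : ℝ := 8 ^ e
    set q : ℝ := (27/32) ^ e
    set r : ℝ := ((A \ A').card : ℝ)
    have m1 : r * N ≤ TT A * (64 * X) := by
      rw [mul_div_assoc', div_le_iff₀ (by positivity)] at hm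
      exact hm
    have m2 : (N * X) * r ≤ (N * X) * (384 * q * N) := by
      have := mul_le_mul_of_nonneg_right m1 hX.le
      nlinarith
    have m3 := le_of_mul_le_mul_left m2 (by positivity)
    rw [pow_succ] at hc
    have hq : 0 ≤ q * N := by positivity
    have : ((A' \ B).card : ℝ) ≤ 2458 * (q * (27/32)) * N := hc
    nlinarith

lemma TT_le_triCount {n : ℕ} (A : Set (G n)) : TT A.toFinset ≤ (triCount A : ℝ) := by
  have h1 : TT A.toFinset = ((Finset.univ.filter (fun p : G n × G n => tri A.toFinset p.1 p.2)).card : ℝ) := by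
    rw [Finset.card_filter, TT]
    simp only [deg]
    rw [← Fintype.sum_prod_type']
    push_cast
    rfl
  rw [h1]
  unfold triCount triBetween
  rw [Nat.card_eq_fintype_card, Fintype.card_subtype]
  norm_cast
  apply Finset.card_le_card_of_injOn (fun p => (p.1, p.2, p.1 + p.2))
  · rintro ⟨x, y⟩ h
    simp only [tri, Set.mem_toFinset, Finset.coe_filter, Finset.mem_univ, true_and, Set.mem_ofPred_eq] at h ⊢
    exact ⟨h.1, h.2.1, h.2.2, add_self_G _⟩
  · rintro ⟨x, y⟩ _ ⟨x', y'⟩ _ h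
    simp only [Prod.mk.injEq] at h ⊢
    exact ⟨h.1, h.2.1⟩

lemma main_bound {n : ℕ} (A : Set (G n)) (ε : ℝ) (hA : FarFromTriangleFree A ε) (e : ℕ) :
    ε ≤ 8 ^ (e + 1) * ((triCount A : ℝ) / (2 ^ n) ^ 2) + 2458 * (27 / 32) ^ e := by
  have hN : (0:ℝ) < 2 ^ n := by positivity
  set F := A.toFinset with hF
  have hm := markov F (2 ^ n / 2 ^ (3 * e + 3))
  set A' := F.filter (fun x => deg F x ≤ 2 ^ n / 2 ^ (3 * e + 3)) with hA'
  have hsub : A' ⊆ F := Finset.filter_subset _ _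
  obtain ⟨B, hBA, hB, hc⟩ := iterate n (n + 1) e (by omega) A' (by
      intro x hx
      exact (deg_mono hsub x).trans (Finset.mem_filter.1 hx).2)
  have hcard : ((F \ B).card : ℝ) ≤ ((F \ A').card : ℝ) + ((A' \ B).card : ℝ) := by
    have : F \ B ⊆ (F \ A') ∪ (A' \ B) := by
      intro x hx
      simp only [Finset.mem_union, Finset.mem_sdiff] at hx ⊢
      tauto
    exact_mod_cast (Finset.card_le_card this).trans (Finset.card_union_le _ _)
  have h1 := hA (B : Set (G n)) (fun x hx => by
      have := hsub (hBA hx)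
      simpa [hF] using this) (by
    intro x hx y hy z hz h
    have : x + y = z := eq_of_add_zero_G h
    exact hB x y ⟨hx, hy, by rw [this]; exact hz⟩)
  have h2 : Nat.card ↥(A \ (B : Set (G n))) = (F \ B).card := by
    rw [Nat.card_eq_card_toFinset]
    congr 1
    ext x; simp [hF]
  rw [h2] at h1
  have p1 : (2:ℝ) ^ (3 * e + 3) = 8 ^ (e + 1) := by
    rw [show 3 * e + 3 = 3 * (e + 1) by ring, pow_mul]; norm_num
  rw [p1] at hm
  have h3 := TT_le_triCount A
  have h4 : ((F \ A').card : ℝ) ≤ 8 ^ (e + 1) * ((triCount A : ℝ) / (2 ^ n) ^ 2) * 2 ^ n := by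
    have : 8 ^ (e + 1) * ((triCount A : ℝ) / (2 ^ n) ^ 2) * 2 ^ n = (triCount A : ℝ) / (2 ^ n / 8 ^ (e + 1)) := by
      field_simp
    rw [this, le_div_iff₀ (by positivity)]
    exact hm.trans h3
  have h5 : ε * 2 ^ n ≤ (8 ^ (e + 1) * ((triCount A : ℝ) / (2 ^ n) ^ 2) + 2458 * (27 / 32) ^ e) * 2 ^ n := by
    rw [add_mul]; linarith
  exact le_of_mul_le_mul_right h5 hN

lemma tower_lower (k : ℕ) : 4 * (k + 4) ≤ tower (k + 4) := by
  induction k with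
  | zero => norm_num [tower]
  | succ k ih =>
    rw [show k + 1 + 4 = (k + 4) + 1 by ring, tower]
    have : tower (k+4) + 1 ≤ 2 ^ tower (k + 4) := Nat.lt_two_pow_self
    have h2 : 2 * 2 ^ (tower (k+4) - 1) = 2 ^ tower (k+4) := by
      rw [← pow_succ', Nat.sub_add_cancel (by omega)]
    have : tower (k+4) - 1 + 1 ≤ 2 ^ (tower (k + 4) - 1) := Nat.lt_two_pow_self
    omega

theorem triangle_removal_F2n :
    ∃ (C : ℝ) (c : ℕ), 0 < C ∧ 0 < c ∧
      ∀ ε : ℝ, 0 < ε → ε ≤ 1 →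
        ∀ (n : ℕ) (A : Set (G n)),
          FarFromTriangleFree A ε →
          (1 / (tower (⌈C * Real.log (1 / ε)⌉₊ + c) : ℝ)) * ((2 : ℝ) ^ n) ^ 2
            ≤ (triCount A : ℝ) := by
  refine ⟨10, 100, by norm_num, by norm_num, ?_⟩
  intro ε hε hε1 n A hA
  set K := ⌈10 * Real.log (1 / ε)⌉₊ with hK
  have hb := main_bound A ε hA (K + 60)
  have hK1 : 10 * Real.log (1 / ε) ≤ K := Nat.le_ceil _
  have hlog : - Real.log ε ≤ K / 10 := by
    rw [one_div, Real.log_inv] at hK1; linarith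
  have hε2 : Real.exp (-(K / 10)) ≤ ε := by
    rw [← Real.le_log_iff_exp_le hε]; linarith
  have hexp : Real.exp (-(K / 10)) = (Real.exp (-(1 / 10))) ^ K := by
    rw [← Real.exp_nat_mul]; congr 1; ring
  have h9 : (9 / 10 : ℝ) ≤ Real.exp (-(1/10)) := by
    have := Real.add_one_le_exp (-(1/10) : ℝ)
    linarith
  have hε3 : (9 / 10 : ℝ) ^ K ≤ ε := by
    refine le_trans ?_ hε2
    rw [hexp]
    gcongr
  have hq : (2458:ℝ) * (27 / 32) ^ (K + 60) ≤ ε / 2 := by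
    have h1 : (27 / 32 : ℝ) ^ K ≤ (9/10) ^ K := pow_le_pow_left₀ (by norm_num) (by norm_num) K
    have h2 : (2458:ℝ) * (27 / 32) ^ 60 ≤ 1 / 2 := by norm_num
    rw [pow_add]
    have h3 : (0:ℝ) ≤ (27 / 32) ^ K := by positivity
    nlinarith
  have hhalf : (1 / 2 : ℝ) ^ K ≤ ε := by
    refine le_trans ?_ hε3
    exact pow_le_pow_left₀ (by norm_num) (by norm_num) K
  have hN : (0:ℝ) < (2 ^ n) ^ 2 := by positivity
  have ht : (2:ℝ) ^ (4 * K + 396) ≤ (tower (K + 100) : ℝ) := by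
    have h1 := tower_lower (K + 95)
    have h2 : tower (K + 100) = 2 ^ tower (K + 95 + 4) := rfl
    rw [h2]
    push_cast
    exact pow_le_pow_right₀ (by norm_num) (by omega)
  set t : ℝ := (triCount A : ℝ) / (2 ^ n) ^ 2 with htdef
  have hfin : ε / 2 ≤ 8 ^ (K + 60 + 1) * t := by linarith
  suffices h : 1 / (tower (K + 100) : ℝ) ≤ t by
    rw [htdef, le_div_iff₀ hN] at h
    exact h
  have h8 : (8:ℝ) ^ (K + 60 + 1) = 2 ^ (3 * K + 183) := by
    rw [show (8:ℝ) = 2 ^ 3 by norm_num, ← pow_mul]; congr 1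
  rw [h8] at hfin
  have h10 : 1 / (tower (K + 100) : ℝ) ≤ 1 / 2 ^ (4 * K + 396) :=
    one_div_le_one_div_of_le (by positivity) ht
  refine h10.trans ?_
  have h11 : (1:ℝ) / 2 ^ (4 * K + 396) ≤ 1 / 2 ^ (4 * K + 184) :=
    one_div_le_one_div_of_le (by positivity) (pow_le_pow_right₀ (by norm_num) (by omega))
  refine h11.trans ?_
  have h12 : (1:ℝ) / 2 ^ (4 * K + 184) = (1 / 2) ^ K / 2 / 2 ^ (3 * K + 183) := by
    rw [show 4 * K + 184 = K + 1 + (3 * K + 183) by ring, pow_add, pow_add, one_div_pow]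
    field_simp
  rw [h12, div_le_iff₀ (by positivity)]
  linarith
end
end

section
/- Let ε₁,…,ε_s and x₁,…,x_s be nonnegative real numbers with ∑_{i∈[s]} ε_i = 1, and let a = ∑_{i∈[s]} ε_i x_i. Suppose β ≤ 1 and I ⊆ [s] is such that x_i ≤ β·a for all i ∈ I, and let c = ∑_{i∈I} ε_i. Then ∑_{i∈[s]} ε_i·f(x_i) ≥ f(a) + (1 − β + f(β))·c·a, where f(x) = x·log x for x > 0 and f(0) = 0. -/
open scoped BigOperators

noncomputable section

theorem ent_tangent (t b : ℝ) (ht : 0 ≤ t) (hb : 0 < b) :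
    t * Real.log b + t - b ≤ ent t := by
  unfold ent
  rcases ht.eq_or_lt with h | h
  · subst h; simp; exact hb.le
  · have h1 := Real.log_le_sub_one_of_pos (div_pos hb h)
    rw [Real.log_div hb.ne' h.ne'] at h1
    have h2 := mul_le_mul_of_nonneg_left h1 ht
    have h3 : t * (b / t - 1) = b - t := by field_simp
    rw [h3] at h2
    linarith

theorem defect_jensen_entropy (s : ℕ) (ε x : Fin s → ℝ)
    (hε : ∀ i, 0 ≤ ε i) (hx : ∀ i, 0 ≤ x i)
    (hsum : ∑ i, ε i = 1) (a : ℝ) (ha : a = ∑ i, ε i * x i)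
    (β : ℝ) (hβ0 : 0 ≤ β) (hβ1 : β ≤ 1)
    (I : Finset (Fin s)) (hI : ∀ i ∈ I, x i ≤ β * a)
    (c : ℝ) (hc : c = ∑ i ∈ I, ε i) :
    ent a + (1 - β + ent β) * c * a ≤ ∑ i, ε i * ent (x i) := by
  have ha0 : 0 ≤ a := ha ▸ Finset.sum_nonneg fun i _ => mul_nonneg (hε i) (hx i)
  rcases ha0.eq_or_lt with h | hpos
  · have hz : ∀ i, ε i * x i = 0 := by
      have := (Finset.sum_eq_zero_iff_of_nonneg
        (fun i (_ : i ∈ Finset.univ) => mul_nonneg (hε i) (hx i))).1 (ha.symm.trans h.symm)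
      exact fun i => this i (Finset.mem_univ i)
    have : ∑ i, ε i * ent (x i) = 0 := by
      apply Finset.sum_eq_zero
      intro i _
      unfold ent
      rw [← mul_assoc, hz i, zero_mul]
    rw [this, ← h]
    simp [ent]
  · have key : ∀ i, x i * (Real.log a + 1) - a +
        (if i ∈ I then (1 - β + ent β) * a else 0) ≤ ent (x i) := by
      intro i
      split_ifs with hi
      · rcases hβ0.eq_or_lt with hb | hb
        · subst hb
          have : x i = 0 := le_antisymm (by simpa using hI i hi) (hx i)
          rw [this]; simp [ent]
        · have h1 := ent_tangent (x i) (β * a) (hx i) (mul_pos hb hpos)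
          rw [Real.log_mul hb.ne' hpos.ne'] at h1
          have h2 := mul_nonneg_of_nonpos_of_nonpos (sub_nonpos.2 (hI i hi))
            (Real.log_nonpos hβ0 hβ1)
          have h3 : ent β = β * Real.log β := rfl
          rw [h3]
          linarith
      · have := ent_tangent (x i) a (hx i) hpos
        linarith
    have hs := Finset.sum_le_sum fun i (_ : i ∈ Finset.univ) =>
      mul_le_mul_of_nonneg_left (key i) (hε i)
    refine le_trans (le_of_eq ?_) hs
    have e : ∀ i, ε i * (x i * (Real.log a + 1) - a +
        (if i ∈ I then (1 - β + ent β) * a else 0)) =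
        (ε i * x i) * (Real.log a + 1) - ε i * a +
        (if i ∈ I then ε i else 0) * ((1 - β + ent β) * a) := by
      intro i
      split_ifs <;> ring
    simp_rw [e]
    rw [Finset.sum_add_distrib, Finset.sum_sub_distrib, ← Finset.sum_mul, ← Finset.sum_mul,
      ← Finset.sum_mul, ← ha, hsum, Finset.sum_ite_mem, Finset.univ_inter, ← hc]
    have h3 : ent a = a * Real.log a := rfl
    rw [h3]
    ring
end
end

section
/- Let H' ≤ H ≤ G = 𝔽₂ⁿ be subgroups and A ⊆ G. Then for every g ∈ G, F_A(H+g, H') ≥ F_A(H+g, H), and consequently F_A(G, H') ≥ F_A(G, H). -/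
open scoped Classical BigOperators

noncomputable section

theorem dens_eq {n : ℕ} (A : Set (G n)) (K : AddSubgroup (G n)) (g : G n) :
    dens A K g = (∑ k : ↥K, (if g + (k : G n) ∈ A then (1 : ℝ) else 0)) / (Nat.card ↥K : ℝ) := by
  have hg : ∀ y : G n, y + y = 0 := fun y => by
    funext i; exact CharTwo.add_self_eq_zero (y i)
  unfold dens
  congr 1
  rw [Finset.sum_boole]
  congr 1
  rw [← Fintype.card_subtype, ← Nat.card_eq_fintype_card]
  refine Nat.card_congr
    { toFun := fun x => ⟨⟨x.1 + g, x.2.2⟩, ?_⟩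
      invFun := fun k => ⟨g + (k.1 : G n), k.2, ?_⟩
      left_inv := ?_
      right_inv := ?_ }
  · have h : g + (x.1 + g) = x.1 := by
      rw [add_comm, add_assoc, hg, add_zero]
    show g + (x.1 + g) ∈ A
    rw [h]; exact x.2.1
  · show g + (k.1 : G n) + g ∈ K
    have h : g + (k.1 : G n) + g = k.1 := by
      rw [add_comm g, add_assoc, hg, add_zero]
    rw [h]; exact k.1.2
  · intro x
    apply Subtype.ext
    show g + (x.1 + g) = x.1
    rw [add_comm, add_assoc, hg, add_zero]
  · intro k
    apply Subtype.ext
    apply Subtype.ext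
    show g + (k.1 : G n) + g = k.1
    rw [add_comm g, add_assoc, hg, add_zero]

theorem dens_nonneg {n : ℕ} (A : Set (G n)) (K : AddSubgroup (G n)) (g : G n) :
    0 ≤ dens A K g := by
  unfold dens; positivity

theorem card_pos' {n : ℕ} (K : AddSubgroup (G n)) : (0 : ℝ) < (Nat.card ↥K : ℝ) := by
  exact_mod_cast Nat.card_pos

theorem dens_mean {n : ℕ} (H' H : AddSubgroup (G n)) (hle : H' ≤ H)
    (A : Set (G n)) (g : G n) :
    ∑ h : ↥H, (Nat.card ↥H : ℝ)⁻¹ * dens A H' (g + ↑h) = dens A H g := by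
  have h1 := card_pos' H
  have h2 := card_pos' H'
  rw [← Finset.mul_sum]
  simp_rw [dens_eq]
  rw [← Finset.sum_div, Finset.sum_comm]
  have key : ∀ k : ↥H', (∑ h : ↥H, (if g + (h : G n) + (k : G n) ∈ A then (1 : ℝ) else 0))
      = ∑ h : ↥H, (if g + (h : G n) ∈ A then (1 : ℝ) else 0) := by
    intro k
    rw [← Equiv.sum_comp (Equiv.addRight (⟨k.1, hle k.2⟩ : ↥H))
      (fun h : ↥H => if g + (h : G n) ∈ A then (1 : ℝ) else 0)]
    refine Finset.sum_congr rfl (fun h _ => ?_)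
    have e : g + (h : G n) + (k : G n)
        = g + ((Equiv.addRight (⟨k.1, hle k.2⟩ : ↥H) h : ↥H) : G n) := by simp [add_assoc]
    by_cases hA : g + (h : G n) + (k : G n) ∈ A
    · rw [if_pos hA, if_pos (e ▸ hA)]
    · rw [if_neg hA, if_neg (e ▸ hA)]
  rw [Finset.sum_congr rfl (fun k _ => key k), Finset.sum_const, Finset.card_univ,
    ← Nat.card_eq_fintype_card, nsmul_eq_mul]
  field_simp

theorem ent_coset {n : ℕ} (H' H : AddSubgroup (G n)) (hle : H' ≤ H)
    (A : Set (G n)) (g : G n) : ent (dens A H g) ≤ meanEntCoset A H H' g := by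
  have h1 := card_pos' H
  have := Real.convexOn_mul_log.map_sum_le (t := (Finset.univ : Finset ↥H))
    (w := fun _ => (Nat.card ↥H : ℝ)⁻¹) (p := fun h => dens A H' (g + ↑h))
    (fun _ _ => by positivity)
    (by
      rw [Finset.sum_const, Finset.card_univ, ← Nat.card_eq_fintype_card, nsmul_eq_mul]
      field_simp)
    (fun _ _ => dens_nonneg _ _ _)
  simp only [smul_eq_mul] at this
  rw [dens_mean H' H hle A g, ← Finset.mul_sum] at this
  unfold meanEntCoset ent
  rw [div_eq_inv_mul]
  exact this

theorem entropy_basic_ineq_two {n : ℕ} (H' H : AddSubgroup (G n)) (hle : H' ≤ H)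
    (A : Set (G n)) :
    (∀ g : G n, ent (dens A H g) ≤ meanEntCoset A H H' g) ∧
    meanEntG A H ≤ meanEntG A H' := by
  refine ⟨ent_coset H' H hle A, ?_⟩
  have h1 := card_pos' H
  unfold meanEntG
  refine div_le_div_of_nonneg_right ?_ (by positivity)
  refine (Finset.sum_le_sum (fun g _ => ent_coset H' H hle A g)).trans (le_of_eq ?_)
  unfold meanEntCoset
  rw [← Finset.sum_div, Finset.sum_comm]
  have key : ∀ h : ↥H, (∑ g : G n, ent (dens A H' (g + ↑h))) = ∑ g : G n, ent (dens A H' g) :=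
    fun h => Equiv.sum_comp (Equiv.addRight (h : G n)) (fun g => ent (dens A H' g))
  rw [Finset.sum_congr rfl (fun h _ => key h), Finset.sum_const, Finset.card_univ,
    ← Nat.card_eq_fintype_card, nsmul_eq_mul]
  field_simp
end
end

section
/- (Finding superregular parts.) Let H ≤ G = 𝔽₂ⁿ be a subgroup, g ∈ G, ρ ∈ (0,1], d > 0, and let A ⊆ H+g satisfy |A| ≥ d·|H|. Then there exist a subgroup H₁ ≤ H, an element z₁ ∈ H, and a set A₁ such that: (1) the index |H/H₁| is at most 2^{log(1/d)/log(1+ρ)}; (2) z₁ ∈ H and the character (-1)^{⟨·,η⟩} identifying any nontrivial coset structure vanishes appropriately, i.e. z₁ is a coset representative of H₁ in H (z₁ ∈ H ∩ H₁^⊥ for a fixed choice of coset representatives); (3) A₁ ⊆ A, A₁ ⊆ H₁ + z₁ + g, and |A₁| ≥ d·|H₁|; (4) the indicator function of A₁ restricted to H₁ + z₁ + g is ρ-superregular on H₁ + z₁ + g. -/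
open scoped Classical BigOperators

noncomputable section

theorem aux_dd {n : ℕ} (a g : G n) : a + g + g = a := by
  funext i
  simp only [Pi.add_apply]
  rw [add_assoc, CharTwo.add_self_eq_zero, add_zero]

theorem aux_dotp_add {n : ℕ} (a b y : G n) : dotp (a + b) y = dotp a y + dotp b y := by
  simp [dotp, add_mul, Finset.sum_add_distrib]

theorem aux_card {n : ℕ} (A : Set (G n)) : (Nat.card ↥A : ℝ) = ∑ a : G n, if a ∈ A then 1 else 0 := by
  rw [Nat.card_eq_fintype_card, Fintype.card_subtype, Finset.sum_boole]

theorem aux_zmod (c : ZMod 2) (h : c ≠ 0) : c = 1 := by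
  revert c; decide

theorem aux_sum {n : ℕ} (H : AddSubgroup (G n)) (g η : G n) (A : Set (G n)) (hA : A ⊆ coset H g) :
    ∑ x : ↥H, (Set.indicator A 1 : G n → ℝ) (↑x + g) * chi ↑x η
      = ∑ a : G n, if a ∈ A then chi (a + g) η else 0 := by
  have h1 : ∑ x : ↥H, (Set.indicator A 1 : G n → ℝ) (↑x + g) * chi ↑x η
      = ∑ x : G n, if x ∈ H then (Set.indicator A 1 : G n → ℝ) (x + g) * chi x η else 0 := by
    rw [← Finset.sum_filter]
    exact (Finset.sum_subtype (Finset.univ.filter (· ∈ H)) (by simp)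
      (fun x => (Set.indicator A 1 : G n → ℝ) (x + g) * chi x η)).symm
  rw [h1, ← Equiv.sum_comp (Equiv.addRight g)]
  refine Finset.sum_congr rfl fun a _ => ?_
  simp only [Equiv.coe_addRight, aux_dd]
  by_cases h : a ∈ A
  · have : a + g ∈ H := hA h
    simp [h, this]
  · simp [h]

theorem aux_kernel {n : ℕ} (H : AddSubgroup (G n)) (η x₀ : G n) (hx : x₀ ∈ H)
    (hx0 : dotp x₀ η ≠ 0) :
    ∃ H' : AddSubgroup (G n), (∀ x, x ∈ H' ↔ x ∈ H ∧ dotp x η = 0) ∧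
      (Nat.card ↥H : ℝ) = 2 * Nat.card ↥H' := by
  have h1 := aux_zmod _ hx0
  let K : AddSubgroup (G n) :=
    { carrier := {x | dotp x η = 0}
      zero_mem' := by simp [dotp]
      add_mem' := by
        intro a b ha hb
        simp only [Set.mem_setOf_eq] at *
        rw [aux_dotp_add, ha, hb, add_zero]
      neg_mem' := by
        intro a ha
        simp only [Set.mem_setOf_eq] at *
        have : dotp (-a) η = - dotp a η := by simp [dotp]
        rw [this, ha, neg_zero] }
  refine ⟨H ⊓ K, fun x => Iff.rfl, ?_⟩
  have e1 := aux_card (H : Set (G n))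
  have e2 := aux_card ((H ⊓ K : AddSubgroup (G n)) : Set (G n))
  have e3 : (∑ a : G n, if a ∈ ((H ⊓ K : AddSubgroup (G n)) : Set (G n)) then (1:ℝ) else 0)
     = ∑ a : G n, if a ∈ H ∧ dotp a η ≠ 0 then (1:ℝ) else 0 := by
    rw [← Equiv.sum_comp (Equiv.addRight x₀)]
    refine Finset.sum_congr rfl fun a _ => ?_
    have : (a + x₀ ∈ ((H ⊓ K : AddSubgroup (G n)) : Set (G n))) ↔ (a ∈ H ∧ dotp a η ≠ 0) := by
      change (a + x₀ ∈ H ∧ dotp (a + x₀) η = 0) ↔ _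
      rw [H.add_mem_cancel_right hx, aux_dotp_add, h1]
      have : ∀ c : ZMod 2, c + 1 = 0 ↔ c ≠ 0 := by decide
      rw [this]
    simp only [Equiv.coe_addRight, this]
  have e4 : (∑ a : G n, if a ∈ (H : Set (G n)) then (1:ℝ) else 0) =
      (∑ a : G n, if a ∈ ((H ⊓ K : AddSubgroup (G n)) : Set (G n)) then (1:ℝ) else 0) +
      ∑ a : G n, if a ∈ H ∧ dotp a η ≠ 0 then (1:ℝ) else 0 := by
    rw [← Finset.sum_add_distrib]
    refine Finset.sum_congr rfl fun a _ => ?_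
    have : (a ∈ ((H ⊓ K : AddSubgroup (G n)) : Set (G n))) ↔ (a ∈ H ∧ dotp a η = 0) := Iff.rfl
    simp only [this, SetLike.mem_coe]
    by_cases h : a ∈ H <;> by_cases h' : dotp a η = 0 <;> simp [h, h']
  have e1' : (Nat.card ↥H : ℝ) = ∑ a : G n, if a ∈ (H : Set (G n)) then (1:ℝ) else 0 := e1
  have e2' : (Nat.card ↥(H ⊓ K) : ℝ) = ∑ a : G n,
    if a ∈ ((H ⊓ K : AddSubgroup (G n)) : Set (G n)) then (1:ℝ) else 0 := e2
  rw [e1', e4, e2', ← e3]; ring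

theorem aux_step {n : ℕ} (H : AddSubgroup (G n)) (g : G n) (ρ : ℝ)
    (A : Set (G n)) (hA : A ⊆ coset H g)
    (hns : ¬ SuperregularOn H g ρ (Set.indicator A 1)) :
    ∃ (H' : AddSubgroup (G n)) (z : G n) (A' : Set (G n)), H' ≤ H ∧ z ∈ H ∧
      (Nat.card ↥H : ℝ) = 2 * Nat.card ↥H' ∧ A' ⊆ A ∧ A' ⊆ coset H' (g + z) ∧
      (1 + ρ) * (Nat.card ↥A : ℝ) ≤ 2 * Nat.card ↥A' := by
  unfold SuperregularOn at hns
  push Not at hns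
  obtain ⟨η, ⟨x₀, hx, hx0⟩, hlt⟩ := hns
  obtain ⟨H', hH', hc⟩ := aux_kernel H η x₀ hx hx0
  have hpos : (0:ℝ) < Nat.card ↥H := by exact_mod_cast Nat.card_pos
  unfold fCoeff at hlt
  rw [aux_sum H g η A hA, aux_sum H g 0 A hA, abs_div, abs_of_pos hpos, ← mul_div_assoc,
    div_lt_div_iff_of_pos_right hpos] at hlt
  have c0 : (∑ a : G n, if a ∈ A then chi (a + g) 0 else 0) = (Nat.card ↥A : ℝ) := by
    rw [aux_card]; simp [chi, dotp]
  let A0 : Set (G n) := {a | a ∈ A ∧ dotp (a + g) η = 0}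
  let A1 : Set (G n) := {a | a ∈ A ∧ dotp (a + g) η ≠ 0}
  have k0 : ∀ a, a ∈ A0 ↔ (a ∈ A ∧ dotp (a + g) η = 0) := fun a => Iff.rfl
  have k1 : ∀ a, a ∈ A1 ↔ (a ∈ A ∧ dotp (a + g) η ≠ 0) := fun a => Iff.rfl
  have cA : (Nat.card ↥A : ℝ) = Nat.card ↥A0 + Nat.card ↥A1 := by
    rw [aux_card, aux_card, aux_card, ← Finset.sum_add_distrib]
    refine Finset.sum_congr rfl fun a _ => ?_
    simp only [k0, k1]
    by_cases h : a ∈ A <;> by_cases h' : dotp (a + g) η = 0 <;> simp [h, h']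
  have cη : (∑ a : G n, if a ∈ A then chi (a + g) η else 0)
      = (Nat.card ↥A0 : ℝ) - Nat.card ↥A1 := by
    rw [aux_card, aux_card, ← Finset.sum_sub_distrib]
    refine Finset.sum_congr rfl fun a _ => ?_
    simp only [k0, k1, chi]
    by_cases h : a ∈ A <;> by_cases h' : dotp (a + g) η = 0 <;> simp [h, h']
  rw [c0, cη] at hlt
  rcases lt_abs.1 hlt with h | h
  · refine ⟨H', 0, A0, fun x h => ((hH' x).1 h).1, H.zero_mem, hc, fun a h => h.1, ?_, by linarith⟩
    intro a ha
    change a + (g + 0) ∈ H'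
    rw [add_zero, hH']
    exact ⟨hA ha.1, ha.2⟩
  · refine ⟨H', x₀, A1, fun x h => ((hH' x).1 h).1, hx, hc, fun a h => h.1, ?_, by linarith⟩
    intro a ha
    change a + (g + x₀) ∈ H'
    rw [← add_assoc, hH', aux_dotp_add, aux_zmod _ hx0, aux_zmod _ ha.2]
    exact ⟨H.add_mem (hA ha.1) hx, by decide⟩

theorem aux_le {n : ℕ} (H : AddSubgroup (G n)) (g : G n) (A : Set (G n)) (hA : A ⊆ coset H g) :
    Nat.card ↥A ≤ Nat.card ↥H :=
  Nat.card_le_card_of_injective (fun a : A => (⟨a.1 + g, hA a.2⟩ : H)) (by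
    intro a b h
    simpa [Subtype.ext_iff] using h)

theorem aux_main {n : ℕ} (ρ : ℝ) (hρ : 0 < ρ) (N : ℕ) : ∀ (H : AddSubgroup (G n)) (g : G n)
    (d : ℝ) (_ : 0 < d) (A : Set (G n)) (_ : A ⊆ coset H g)
    (_ : d * (Nat.card ↥H : ℝ) ≤ (Nat.card ↥A : ℝ)) (_ : Nat.card ↥H ≤ N),
    ∃ (A₁ : Set (G n)) (H₁ : AddSubgroup (G n)) (z₁ : G n),
      H₁ ≤ H ∧
      (Nat.card ↥H : ℝ) / (Nat.card ↥H₁ : ℝ)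
        ≤ (2 : ℝ) ^ (Real.log (1 / d) / Real.log (1 + ρ)) ∧
      z₁ ∈ H ∧
      A₁ ⊆ A ∧ A₁ ⊆ coset H₁ (g + z₁) ∧
      d * (Nat.card ↥H₁ : ℝ) ≤ (Nat.card ↥A₁ : ℝ) ∧
      SuperregularOn H₁ (g + z₁) ρ (Set.indicator A₁ 1) := by
  have hlog : 0 < Real.log (1 + ρ) := Real.log_pos (by linarith)
  induction N with
  | zero =>
    intro H g d _ A _ _ hN
    have : 0 < Nat.card ↥H := Nat.card_pos
    omega
  | succ N ih =>
    intro H g d hd A hA hAc hN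
    have hpos : (0:ℝ) < Nat.card ↥H := by exact_mod_cast Nat.card_pos
    by_cases hs : SuperregularOn H g ρ (Set.indicator A 1)
    · refine ⟨A, H, 0, le_rfl, ?_, H.zero_mem, subset_rfl, by simpa using hA, hAc, by simpa using hs⟩
      rw [div_self hpos.ne']
      apply Real.one_le_rpow (by norm_num)
      apply div_nonneg _ hlog.le
      apply Real.log_nonneg
      rw [le_div_iff₀ hd, one_mul]
      have : (Nat.card ↥A : ℝ) ≤ Nat.card ↥H := by exact_mod_cast aux_le H g A hA
      nlinarith
    · obtain ⟨H', z, A', hle, hz, hc, hA'A, hA', hb⟩ := aux_step H g ρ A hA hs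
      have hpos' : (0:ℝ) < Nat.card ↥H' := by exact_mod_cast Nat.card_pos
      have hlt : Nat.card ↥H' < Nat.card ↥H := by
        have : (Nat.card ↥H' : ℝ) < Nat.card ↥H := by linarith
        exact_mod_cast this
      obtain ⟨A₁, H₁, z₁, h1, h2, h3, h4, h5, h6, h7⟩ := ih H' (g + z) ((1 + ρ) * d)
        (by positivity) A' hA' (by
          rw [hc] at hAc
          nlinarith) (by omega)
      refine ⟨A₁, H₁, z + z₁, h1.trans hle, ?_, H.add_mem hz (hle h3), h4.trans hA'A,
        by rwa [← add_assoc], ?_, by rwa [← add_assoc]⟩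
      · rw [hc, mul_div_assoc]
        have : Real.log (1 / d) / Real.log (1 + ρ)
            = 1 + Real.log (1 / ((1 + ρ) * d)) / Real.log (1 + ρ) := by
          rw [one_div, one_div, Real.log_inv, Real.log_inv,
            Real.log_mul (by positivity) (by positivity)]
          field_simp
          ring
        rw [this, Real.rpow_add (by norm_num), Real.rpow_one]
        linarith
      · have : 0 ≤ ρ * d * (Nat.card ↥H₁ : ℝ) := by positivity
        nlinarith

theorem finding_superregular_parts {n : ℕ} (H : AddSubgroup (G n)) (g : G n)
    (ρ d : ℝ) (hρ : ρ ∈ Set.Ioc (0 : ℝ) 1) (hd : 0 < d)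
    (A : Set (G n)) (hA : A ⊆ coset H g)
    (hAcard : d * (Nat.card ↥H : ℝ) ≤ (Nat.card ↥A : ℝ)) :
    ∃ (A₁ : Set (G n)) (H₁ : AddSubgroup (G n)) (z₁ : G n),
      H₁ ≤ H ∧
      (Nat.card ↥H : ℝ) / (Nat.card ↥H₁ : ℝ)
        ≤ (2 : ℝ) ^ (Real.log (1 / d) / Real.log (1 + ρ)) ∧
      z₁ ∈ H ∧
      A₁ ⊆ A ∧ A₁ ⊆ coset H₁ (g + z₁) ∧
      d * (Nat.card ↥H₁ : ℝ) ≤ (Nat.card ↥A₁ : ℝ) ∧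
      SuperregularOn H₁ (g + z₁) ρ (Set.indicator A₁ 1) := by
  exact aux_main ρ hρ.1 _ H g d hd A hA hAcard le_rfl
end
end

section
/- (Entropy increment from shattering.) Let H' ≤ H ≤ G = 𝔽₂ⁿ be subgroups, A ⊆ G, and g ∈ G. If H' (α,β,k)-shatters A on H+g, then F_A(H+g, H') ≥ F_A(H+g, H) + (1 − β + f(β))·α·(|A ∩ (H+g)|/|H|). -/
open scoped Classical BigOperators

noncomputable section

lemma ent_tangent_s7 (x y : ℝ) (hx : 0 ≤ x) (hy : 0 < y) :
    x * Real.log y + x - y ≤ ent x := by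
  unfold ent
  rcases hx.eq_or_lt with rfl | hx
  · simp; exact hy.le
  · have h := Real.log_le_sub_one_of_pos (div_pos hy hx)
    rw [Real.log_div hy.ne' hx.ne'] at h
    have h2 := mul_le_mul_of_nonneg_left h hx.le
    have h3 : x * (y / x - 1) = y - x := by field_simp
    rw [h3] at h2
    linarith

lemma fiber_card {n : ℕ} (H' H : AddSubgroup (G n)) (hle : H' ≤ H) (v : G n) :
    (∑ h : ↥H, if v + (h : G n) ∈ H' then (1 : ℝ) else 0) =
      if v ∈ H then (Nat.card ↥H' : ℝ) else 0 := by
  split_ifs with hv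
  · rw [← Finset.sum_filter, Finset.sum_const, nsmul_eq_mul, mul_one, Nat.card_eq_fintype_card,
      ← Finset.card_univ]
    congr 1
    refine Finset.card_bij' (fun h _ => if hh : v + (h : G n) ∈ H' then ⟨v + h, hh⟩ else 0)
      (fun k _ => ⟨-v + k, H.add_mem (H.neg_mem hv) (hle k.2)⟩) ?_ ?_ ?_ ?_
    · intros; simp
    · intros; simp
    · intro h hh
      have := (Finset.mem_filter.mp hh).2
      simp [this]
    · intro k _
      simp
  · apply Finset.sum_eq_zero
    intro h _
    rw [if_neg]
    intro hh
    apply hv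
    have := H.sub_mem (hle hh) h.2
    simpa using this

lemma card_eq_sum {n : ℕ} (A : Set (G n)) (H : AddSubgroup (G n)) (g : G n) :
    (Nat.card ↥(A ∩ coset H g) : ℝ) =
      ∑ a : G n, if a ∈ A then (if a + g ∈ H then (1 : ℝ) else 0) else 0 := by
  rw [Nat.card_eq_fintype_card, Fintype.card_subtype, Finset.card_filter]
  push_cast
  refine Finset.sum_congr rfl fun a _ => ?_
  by_cases h1 : a ∈ A <;> by_cases h2 : a + g ∈ H <;> simp [coset, h1, h2]

lemma sum_dens {n : ℕ} (H' H : AddSubgroup (G n)) (hle : H' ≤ H) (A : Set (G n)) (g : G n) :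
    ∑ h : ↥H, dens A H' (g + ↑h) = (Nat.card ↥H : ℝ) * dens A H g := by
  have p1 : (0 : ℝ) < Nat.card ↥H := by exact_mod_cast Nat.card_pos
  have p2 : (0 : ℝ) < Nat.card ↥H' := by exact_mod_cast Nat.card_pos
  unfold dens
  rw [← Finset.sum_div, mul_div_cancel₀ _ p1.ne', div_eq_iff p2.ne', card_eq_sum, Finset.sum_mul]
  simp_rw [card_eq_sum]
  rw [Finset.sum_comm]
  refine Finset.sum_congr rfl fun a _ => ?_
  by_cases h1 : a ∈ A
  · simp only [h1, if_true, ← add_assoc]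
    rw [fiber_card H' H hle]
    split_ifs <;> simp
  · simp [h1]

theorem entropy_increment_from_shattering {n : ℕ} (H' H : AddSubgroup (G n))
    (hle : H' ≤ H) (A : Set (G n)) (g : G n) (α β k : ℝ)
    (hα : α ∈ Set.Ioc (0 : ℝ) 1) (hβ : β ∈ Set.Ioc (0 : ℝ) 1) (hk : 0 ≤ k)
    (hsh : Shatters H' H A g α β k) :
    ent (dens A H g) + (1 - β + ent β) * α * dens A H g ≤ meanEntCoset A H H' g := by
  obtain ⟨-, hs⟩ := hsh
  obtain ⟨hβ0, hβ1⟩ := hβ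
  have p1 : (0 : ℝ) < Nat.card ↥H := by exact_mod_cast Nat.card_pos
  have p2 : (0 : ℝ) < Nat.card ↥H' := by exact_mod_cast Nat.card_pos
  have hsum := sum_dens H' H hle A g
  have hx0 : ∀ h : ↥H, 0 ≤ dens A H' (g + ↑h) := fun h => by unfold dens; positivity
  have hd0 : 0 ≤ dens A H g := by unfold dens; positivity
  unfold meanEntCoset
  rw [le_div_iff₀ p1]
  rw [le_div_iff₀ p1, Nat.card_eq_fintype_card (α := {g' : ↥H // _}), Fintype.card_subtype,
    Finset.card_filter] at hs
  push_cast at hs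
  generalize dens A H g = d at *
  have hc0 : 0 ≤ 1 - β + ent β := by
    have := ent_tangent_s7 β 1 hβ0.le one_pos
    simp at this; linarith
  rcases hd0.eq_or_lt with rfl | hd
  · rw [mul_zero, Finset.sum_eq_zero_iff_of_nonneg (fun h _ => hx0 h)] at hsum
    rw [Finset.sum_eq_zero (fun h hh => by rw [hsum h hh]; simp [ent])]
    simp [ent]
  · have key : ∀ h : ↥H, dens A H' (g + ↑h) * Real.log d + dens A H' (g + ↑h) - d +
        (d * (1 - β + ent β)) * (if (Nat.card ↥(A ∩ coset H' (g + ↑h)) : ℝ) ≤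
          β * d * (Nat.card ↥H' : ℝ) then 1 else 0) ≤ ent (dens A H' (g + ↑h)) := by
      intro h
      split_ifs with hh
      · have hx : dens A H' (g + ↑h) ≤ β * d := by
          unfold dens; rwa [div_le_iff₀ p2]
        have ht := ent_tangent_s7 _ (β * d) (hx0 h) (mul_pos hβ0 hd)
        rw [Real.log_mul hβ0.ne' hd.ne'] at ht
        have := mul_le_mul_of_nonpos_right hx (Real.log_nonpos hβ0.le hβ1)
        have e : ent β = β * Real.log β := rfl
        rw [e]
        nlinarith
      · have ht := ent_tangent_s7 _ d (hx0 h) hd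
        linarith
    have hS := Finset.sum_le_sum (fun h (_ : h ∈ Finset.univ) => key h)
    rw [Finset.sum_add_distrib, Finset.sum_sub_distrib, Finset.sum_add_distrib, ← Finset.sum_mul,
      ← Finset.mul_sum, hsum, Finset.sum_const, Finset.card_univ, nsmul_eq_mul,
      ← Nat.card_eq_fintype_card] at hS
    have h5 := mul_le_mul_of_nonneg_left hs (mul_nonneg hd.le hc0)
    have e : ent d = d * Real.log d := rfl
    rw [e]
    refine le_trans ?_ hS
    refine le_trans (le_of_eq ?_) (add_le_add_right h5 _)
    ring
end
end

section
/- (Shattering with a superregular part.) Let H' ≤ H ≤ G = 𝔽₂ⁿ be subgroups, g₁, g₂, g₃ ∈ G with g₁+g₂+g₃ = 0, and z₁ ∈ H. Let A, B, C ⊆ G with |A ∩ (H'+g₁+z₁)|/|H'| = d₁, |B ∩ (H+g₂)|/|H| = d₂, |C ∩ (H+g₃)|/|H| = d₃, and suppose the indicator function of A restricted to H'+g₁+z₁ is (d₂d₃/4)-superregular on H'+g₁+z₁. Then either there are at least (1/4)·d₁d₂d₃·|H|·|H'| triples (a,b,c) with a ∈ A ∩ (H'+g₁+z₁), b ∈ B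 ∩ (H+g₂), c ∈ C ∩ (H+g₃), and a+b+c = 0, or H' (1/20, 3/4, log₂|H/H'|)-shatters either B on H+g₂ or C on H+g₃. -/
open scoped Classical BigOperators

noncomputable section

lemma chi_add_right {n : ℕ} (x y z : G n) : chi x (y + z) = chi x y * chi x z := by
  have h : dotp x (y + z) = dotp x y + dotp x z := by
    simp [dotp, mul_add, Finset.sum_add_distrib]
  unfold chi
  rw [h]
  generalize dotp x y = a
  generalize dotp x z = b
  have key : ∀ a b : ZMod 2, (a + b = 0 ↔ (a = 0 ↔ b = 0)) := by decide
  by_cases ha : a = 0 <;> by_cases hb : b = 0 <;> simp [key, ha, hb]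

lemma dotp_comm' {n : ℕ} (x y : G n) : dotp x y = dotp y x := by
  simp [dotp, mul_comm]

lemma chi_comm {n : ℕ} (x y : G n) : chi x y = chi y x := by
  simp [chi, dotp_comm' x y]

lemma chi_add_left {n : ℕ} (x y z : G n) : chi (x + y) z = chi x z * chi y z := by
  rw [chi_comm, chi_add_right, chi_comm z, chi_comm z]

lemma chi_zero_right {n : ℕ} (x : G n) : chi x 0 = 1 := by simp [chi, dotp]
lemma chi_zero_left {n : ℕ} (x : G n) : chi 0 x = 1 := by simp [chi, dotp]

lemma sum_chi_K {n : ℕ} (K : AddSubgroup (G n)) (η : G n) (h : ∃ x ∈ K, dotp x η ≠ 0) :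
    ∑ x : ↥K, chi (x : G n) η = 0 := by
  obtain ⟨x0, hx0, hne⟩ := h
  have h1 : ∑ x : ↥K, chi (x : G n) η = ∑ x : ↥K, chi ((x + ⟨x0, hx0⟩ : ↥K) : G n) η :=
    (Equiv.sum_comp (Equiv.addRight (⟨x0, hx0⟩ : ↥K)) (fun x : ↥K => chi (x : G n) η)).symm
  have h2 : chi x0 η = -1 := by simp [chi, hne]
  simp only [AddSubgroup.coe_add, chi_add_left, h2] at h1
  rw [← Finset.sum_mul] at h1
  linarith

lemma sum_chi_G {n : ℕ} (x : G n) :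
    ∑ η : G n, chi x η = if x = 0 then (Fintype.card (G n) : ℝ) else 0 := by
  split_ifs with h
  · simp [h, chi_zero_left]
  · obtain ⟨i, hi⟩ := Function.ne_iff.mp h
    have hne : dotp x (Pi.single i 1) ≠ 0 := by
      simpa [dotp, Pi.single_apply] using hi
    have h2 : chi x (Pi.single i 1) = -1 := by simp [chi, hne]
    have h1 : ∑ η : G n, chi x η = ∑ η : G n, chi x (η + Pi.single i 1) :=
      (Equiv.sum_comp (Equiv.addRight (Pi.single i 1 : G n)) (fun η => chi x η)).symm
    simp only [chi_add_right, h2] at h1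
    rw [← Finset.sum_mul] at h1
    linarith

def FT {n : ℕ} (K : AddSubgroup (G n)) (f : ↥K → ℝ) (η : G n) : ℝ :=
  ∑ x : ↥K, f x * chi (x : G n) η

lemma FT_ann {n : ℕ} (K : AddSubgroup (G n)) (f : ↥K → ℝ) (η : G n)
    (h : ¬ ∃ x ∈ K, dotp x η ≠ 0) : FT K f η = ∑ x, f x := by
  push Not at h
  unfold FT
  refine Finset.sum_congr rfl fun x _ => ?_
  simp [chi, h x x.2]

lemma card_ann' {n : ℕ} (K : AddSubgroup (G n)) :
    (∑ η : G n, if (∃ x ∈ K, dotp x η ≠ 0) then (0 : ℝ) else 1) * (Fintype.card ↥K : ℝ)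
      = Fintype.card (G n) := by
  have h1 : ∑ η : G n, ∑ x : ↥K, chi (x : G n) η = Fintype.card (G n) := by
    rw [Finset.sum_comm]
    simp only [sum_chi_G]
    simp
  rw [← h1, Finset.sum_mul]
  refine Finset.sum_congr rfl fun η _ => ?_
  split_ifs with h
  · rw [sum_chi_K K η h]; simp
  · have := FT_ann K (fun _ => 1) η h
    simp only [FT, one_mul] at this
    rw [this]; simp

lemma add_eq_zero_G {n : ℕ} (x y : G n) : x + y = 0 ↔ y = x := by
  constructor
  · intro h
    have : x + (x + y) = x := by rw [h, add_zero]
    rwa [← add_assoc, add_self_G, zero_add] at this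
  · rintro rfl; exact add_self_G _

lemma FT_parseval {n : ℕ} (K : AddSubgroup (G n)) (u : ↥K → ℝ) :
    ∑ η, FT K u η ^ 2 = Fintype.card (G n) * ∑ x, u x ^ 2 := by
  have : ∀ η, FT K u η ^ 2 = ∑ x : ↥K, ∑ y : ↥K, u x * u y * chi ((x : G n) + (y : G n)) η := by
    intro η
    rw [sq, FT, Finset.sum_mul_sum]
    refine Finset.sum_congr rfl fun x _ => Finset.sum_congr rfl fun y _ => ?_
    rw [chi_add_left]; ring
  simp only [this]
  rw [Finset.sum_comm, Finset.mul_sum]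
  refine Finset.sum_congr rfl fun x _ => ?_
  rw [Finset.sum_comm]
  simp only [← Finset.mul_sum, sum_chi_G, add_eq_zero_G, SetLike.coe_eq_coe]
  simp
  ring

lemma FT_triple {n : ℕ} (K : AddSubgroup (G n)) (f u v : ↥K → ℝ) :
    ∑ η, FT K f η * (FT K u η * FT K v η)
      = Fintype.card (G n) * ∑ x, ∑ y, f x * u y * v (x + y) := by
  have : ∀ η, FT K f η * (FT K u η * FT K v η) = ∑ x : ↥K, ∑ y : ↥K, ∑ z : ↥K,
      f x * u y * v z * chi (((x + y : ↥K) : G n) + (z : G n)) η := by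
    intro η
    simp only [FT]
    rw [Finset.sum_mul_sum, Finset.sum_mul]
    refine Finset.sum_congr rfl fun x _ => ?_
    rw [Finset.mul_sum]
    refine Finset.sum_congr rfl fun y _ => ?_
    rw [Finset.mul_sum]
    refine Finset.sum_congr rfl fun z _ => ?_
    rw [chi_add_left, AddSubgroup.coe_add, chi_add_left]; ring
  simp only [this]
  rw [Finset.sum_comm, Finset.mul_sum]
  refine Finset.sum_congr rfl fun x _ => ?_
  rw [Finset.sum_comm, Finset.mul_sum]
  refine Finset.sum_congr rfl fun y _ => ?_
  rw [Finset.sum_comm]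
  simp only [← Finset.mul_sum, sum_chi_G, add_eq_zero_G, SetLike.coe_eq_coe]
  simp
  ring

lemma fourier_lower {n : ℕ} (K : AddSubgroup (G n)) (f u v : ↥K → ℝ) (ρ : ℝ)
    (hM : 0 ≤ ρ * ∑ x, f x)
    (hu : ∀ x, u x ^ 2 ≤ 1) (hv : ∀ x, v x ^ 2 ≤ 1)
    (hreg : ∀ η : G n, (∃ x ∈ K, dotp x η ≠ 0) → |FT K f η| ≤ ρ * ∑ x, f x) :
    (∑ x, f x) * (∑ x, u x) * (∑ x, v x) - ρ * (∑ x, f x) * (Fintype.card ↥K : ℝ) ^ 2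
      ≤ (Fintype.card ↥K : ℝ) * ∑ x, ∑ y, f x * u y * v (x + y) := by
  set M := ∑ x, f x with hMdef
  have hN : (0 : ℝ) < Fintype.card (G n) := by exact_mod_cast Fintype.card_pos
  have hK : (0 : ℝ) < Fintype.card ↥K := by exact_mod_cast Fintype.card_pos
  have hP : ∀ w : ↥K → ℝ, (∀ x, w x ^ 2 ≤ 1) →
      ∑ η, FT K w η ^ 2 ≤ Fintype.card (G n) * (Fintype.card ↥K : ℝ) := by
    intro w hw
    rw [FT_parseval]
    refine mul_le_mul_of_nonneg_left ?_ hN.le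
    calc ∑ x, w x ^ 2 ≤ ∑ x : ↥K, (1 : ℝ) := Finset.sum_le_sum fun x _ => hw x
      _ = _ := by simp
  have hpt : ∀ η : G n, (if (∃ x ∈ K, dotp x η ≠ 0) then (0 : ℝ) else 1) *
        (M * (∑ x, u x) * (∑ x, v x)) - (ρ * M) * ((FT K u η ^ 2 + FT K v η ^ 2) / 2)
      ≤ FT K f η * (FT K u η * FT K v η) := by
    intro η
    split_ifs with h
    · have h1 := hreg η h
      have h2 : |FT K u η * FT K v η| ≤ (FT K u η ^ 2 + FT K v η ^ 2) / 2 := by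
        rw [abs_le]
        constructor <;> nlinarith [sq_nonneg (FT K u η + FT K v η), sq_nonneg (FT K u η - FT K v η)]
      have h3 : |FT K f η * (FT K u η * FT K v η)|
          ≤ (ρ * M) * ((FT K u η ^ 2 + FT K v η ^ 2) / 2) := by
        rw [abs_mul]
        exact mul_le_mul h1 h2 (abs_nonneg _) hM
      have := (abs_le.mp h3).1
      linarith
    · rw [FT_ann K f η h, ← hMdef]
      have h4 : 0 ≤ (ρ * M) * ((FT K u η ^ 2 + FT K v η ^ 2) / 2) :=
        mul_nonneg hM (by positivity)
      have e1 := FT_ann K u η h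
      have e2 := FT_ann K v η h
      rw [e1, e2] at h4 ⊢
      linarith
  have hs := Finset.sum_le_sum (fun η (_ : η ∈ Finset.univ) => hpt η)
  rw [FT_triple, Finset.sum_sub_distrib, ← Finset.sum_mul, ← Finset.mul_sum, ← Finset.sum_div,
    Finset.sum_add_distrib] at hs
  have hA := card_ann' K
  set a := (∑ η : G n, if (∃ x ∈ K, dotp x η ≠ 0) then (0 : ℝ) else 1)
  set S := ∑ x, ∑ y, f x * u y * v (x + y)
  set N := (Fintype.card (G n) : ℝ)
  set k := (Fintype.card ↥K : ℝ)
  have h5 : (ρ * M) * ((∑ η, FT K u η ^ 2 + ∑ η, FT K v η ^ 2) / 2) ≤ (ρ * M) * (N * k) :=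
    mul_le_mul_of_nonneg_left (by linarith [hP u hu, hP v hv]) hM
  have h6 : a * (M * (∑ x, u x) * (∑ x, v x)) - (ρ * M) * (N * k) ≤ N * S := by linarith
  have h7 := mul_le_mul_of_nonneg_left h6 hK.le
  have h8 : k * (a * (M * (∑ x, u x) * (∑ x, v x)) - (ρ * M) * (N * k))
     = N * (M * (∑ x, u x) * (∑ x, v x) - ρ * M * k ^ 2) := by
    rw [← hA]; ring
  rw [h8] at h7
  refine le_of_mul_le_mul_left ?_ hN
  linarith

lemma card_inter_coset {n : ℕ} (K : AddSubgroup (G n)) (A : Set (G n)) (g : G n) :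
    (Nat.card ↥(A ∩ coset K g) : ℝ) = ∑ x : ↥K, Set.indicator A (1 : G n → ℝ) (x + g) := by
  have e : ↥(A ∩ coset K g) ≃ {x : ↥K // (x : G n) + g ∈ A} :=
    { toFun := fun a => ⟨⟨a.1 + g, a.2.2⟩, by
        have := a.2.1
        simpa [add_assoc, add_self_G] using this⟩
      invFun := fun x => ⟨x.1 + g, x.2, by simp [coset, add_assoc, add_self_G]⟩
      left_inv := fun a => by ext1; simp [add_assoc, add_self_G]
      right_inv := fun x => by ext1; ext1; simp [add_assoc, add_self_G] }
  rw [Nat.card_congr e, Nat.card_eq_fintype_card, Fintype.card_subtype]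
  simp [Set.indicator_apply, Finset.sum_ite]

lemma tri_lower {n : ℕ} (H' H : AddSubgroup (G n))
    (hle : H' ≤ H) (g₁ g₂ g₃ : G n) (hg : g₁ + g₂ + g₃ = 0) (z₁ : G n) (hz : z₁ ∈ H)
    (A B C : Set (G n)) :
    ∑ y : ↥H, ∑ x : ↥H', Set.indicator A (1 : G n → ℝ) (x + (g₁ + z₁)) *
      Set.indicator B (1 : G n → ℝ) (y + g₂) *
      Set.indicator C (1 : G n → ℝ) (x + y + (g₃ + z₁)) ≤
    (triBetween (A ∩ coset H' (g₁ + z₁)) (B ∩ coset H g₂) (C ∩ coset H g₃) : ℝ) := by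
  have h1 : ∑ y : ↥H, ∑ x : ↥H', Set.indicator A (1 : G n → ℝ) (x + (g₁ + z₁)) *
      Set.indicator B (1 : G n → ℝ) (y + g₂) *
      Set.indicator C (1 : G n → ℝ) (x + y + (g₃ + z₁)) =
      (Nat.card {p : ↥H × ↥H' // (p.2 : G n) + (g₁ + z₁) ∈ A ∧ (p.1 : G n) + g₂ ∈ B ∧
        (p.2 : G n) + p.1 + (g₃ + z₁) ∈ C} : ℝ) := by
    rw [Nat.card_eq_fintype_card, Fintype.card_subtype, Finset.card_filter,
      ← Finset.univ_product_univ, Finset.sum_product]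
    push_cast
    refine Finset.sum_congr rfl fun y _ => Finset.sum_congr rfl fun x _ => ?_
    simp only [Set.indicator_apply, Pi.one_apply]
    split_ifs <;> simp_all
  rw [h1]
  unfold triBetween
  norm_cast
  refine Nat.card_le_card_of_injective (fun p => ⟨((p.1.2 : G n) + (g₁ + z₁), (p.1.1 : G n) + g₂,
    (p.1.2 : G n) + p.1.1 + (g₃ + z₁)), ⟨p.2.1, ?_⟩, ⟨p.2.2.1, ?_⟩, ⟨p.2.2.2, ?_⟩, ?_⟩) ?_
  · have : (p.1.2 : G n) + (g₁ + z₁) + (g₁ + z₁) = p.1.2 := by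
      rw [add_assoc, add_self_G, add_zero]
    simp only [coset, Set.mem_ofPred_eq, this]
    exact p.1.2.2
  · simp [coset, add_assoc, add_self_G]
  · have : (p.1.2 : G n) + p.1.1 + (g₃ + z₁) + g₃ = p.1.2 + p.1.1 + z₁ := by
      have := add_self_G g₃
      linear_combination (exp := 1) this
    simp only [coset, Set.mem_ofPred_eq, this]
    exact H.add_mem (H.add_mem (hle p.1.2.2) p.1.1.2) hz
  · have a1 := add_self_G (p.1.2 : G n)
    have a2 := add_self_G (p.1.1 : G n)
    have a3 := add_self_G z₁
    linear_combination (exp := 1) a1 + a2 + a3 + hg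
  · rintro ⟨⟨y, x⟩, hp⟩ ⟨⟨y', x'⟩, hp'⟩ h
    simp only [Subtype.mk.injEq, Prod.mk.injEq, add_left_inj, SetLike.coe_eq_coe] at h
    simp [h.1, h.2.1]

lemma not_shatters {n : ℕ} (H' H : AddSubgroup (G n)) (A : Set (G n)) (g : G n)
    (h : ¬ Shatters H' H A g (1 / 20) (3 / 4)
      (Real.logb 2 ((Nat.card ↥H : ℝ) / (Nat.card ↥H' : ℝ)))) :
    ∑ z : ↥H, (if (Nat.card ↥(A ∩ coset H' (g + ↑z)) : ℝ) ≤
      3 / 4 * dens A H g * (Nat.card ↥H' : ℝ) then (1 : ℝ) else 0) ≤ (Nat.card ↥H : ℝ) / 20 := by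
  have hH : (0 : ℝ) < Nat.card ↥H := by exact_mod_cast Nat.card_pos
  have hH' : (0 : ℝ) < Nat.card ↥H' := by exact_mod_cast Nat.card_pos
  unfold Shatters at h
  rw [Real.rpow_logb (by norm_num) (by norm_num) (by positivity)] at h
  simp only [le_refl, true_and, not_le] at h
  rw [div_lt_iff₀ hH] at h
  rw [Finset.sum_boole, ← Fintype.card_subtype, ← Nat.card_eq_fintype_card]
  linarith

theorem shattering_with_superregular_part {n : ℕ} (H' H : AddSubgroup (G n))
    (hle : H' ≤ H) (g₁ g₂ g₃ : G n) (hg : g₁ + g₂ + g₃ = 0) (z₁ : G n) (hz : z₁ ∈ H)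
    (A B C : Set (G n)) (d₁ d₂ d₃ : ℝ)
    (hd₁ : (Nat.card ↥(A ∩ coset H' (g₁ + z₁)) : ℝ) / (Nat.card ↥H' : ℝ) = d₁)
    (hd₂ : dens B H g₂ = d₂) (hd₃ : dens C H g₃ = d₃)
    (hreg : SuperregularOn H' (g₁ + z₁) (d₂ * d₃ / 4) (Set.indicator A 1)) :
    (1 / 4 * (d₁ * d₂ * d₃) * (Nat.card ↥H : ℝ) * (Nat.card ↥H' : ℝ)
        ≤ (triBetween (A ∩ coset H' (g₁ + z₁)) (B ∩ coset H g₂) (C ∩ coset H g₃) : ℝ)) ∨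
    Shatters H' H B g₂ (1 / 20) (3 / 4)
      (Real.logb 2 ((Nat.card ↥H : ℝ) / (Nat.card ↥H' : ℝ))) ∨
    Shatters H' H C g₃ (1 / 20) (3 / 4)
      (Real.logb 2 ((Nat.card ↥H : ℝ) / (Nat.card ↥H' : ℝ))) := by
  rw [or_iff_not_imp_right]
  intro hns
  push Not at hns
  have hB := not_shatters H' H B g₂ hns.1
  have hC0 := not_shatters H' H C g₃ hns.2
  have hC : ∑ z : ↥H, (if (Nat.card ↥(C ∩ coset H' (g₃ + ((z + ⟨z₁, hz⟩ : ↥H) : G n))) : ℝ) ≤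
      3 / 4 * dens C H g₃ * (Nat.card ↥H' : ℝ) then (1 : ℝ) else 0) ≤ (Nat.card ↥H : ℝ) / 20 := by
    refine le_trans (le_of_eq ?_) hC0
    exact Equiv.sum_comp (Equiv.addRight (⟨z₁, hz⟩ : ↥H)) (fun z : ↥H =>
      if (Nat.card ↥(C ∩ coset H' (g₃ + (z : G n))) : ℝ) ≤
      3 / 4 * dens C H g₃ * (Nat.card ↥H' : ℝ) then (1 : ℝ) else 0)
  rw [hd₂] at hB
  rw [hd₃] at hC
  have hT := tri_lower H' H hle g₁ g₂ g₃ hg z₁ hz A B C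
  have hN : (0 : ℝ) < Nat.card ↥H := by exact_mod_cast Nat.card_pos
  have hk : (0 : ℝ) < Nat.card ↥H' := by exact_mod_cast Nat.card_pos
  have h1 : 0 ≤ d₁ := by rw [← hd₁]; positivity
  have h2 : 0 ≤ d₂ := by rw [← hd₂]; unfold dens; positivity
  have h3 : 0 ≤ d₃ := by rw [← hd₃]; unfold dens; positivity
  have hf : ∑ x : ↥H', Set.indicator A (1 : G n → ℝ) (x + (g₁ + z₁)) = d₁ * Nat.card ↥H' := by
    rw [← card_inter_coset, ← hd₁]; field_simp
  set P : ↥H → ℝ := fun z => (Nat.card ↥(B ∩ coset H' (g₂ + ↑z)) : ℝ) with hPd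
  set Q : ↥H → ℝ := fun z => (Nat.card ↥(C ∩ coset H' (g₃ + ((z + ⟨z₁, hz⟩ : ↥H) : G n))) : ℝ)
    with hQd
  set S : ↥H → ℝ := fun z => ∑ x : ↥H', ∑ y : ↥H',
    Set.indicator A (1 : G n → ℝ) (x + (g₁ + z₁)) *
      Set.indicator B (1 : G n → ℝ) (y + (g₂ + z)) *
      Set.indicator C (1 : G n → ℝ) ((x + y : ↥H') + (g₃ + ((z + ⟨z₁, hz⟩ : ↥H) : G n))) with hSd
  have hind : ∀ (D : Set (G n)) x, Set.indicator D (1 : G n → ℝ) x ^ 2 ≤ 1 := by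
    intro D x
    rw [Set.indicator_apply]; split_ifs <;> simp
  have hloc : ∀ z, (d₁ * Nat.card ↥H') * P z * Q z
      - (d₂ * d₃ / 4) * (d₁ * Nat.card ↥H') * (Nat.card ↥H' : ℝ) ^ 2 ≤ Nat.card ↥H' * S z := by
    intro z
    have := fourier_lower H' (fun x => Set.indicator A (1 : G n → ℝ) (x + (g₁ + z₁)))
      (fun y => Set.indicator B (1 : G n → ℝ) (y + (g₂ + z)))
      (fun y => Set.indicator C (1 : G n → ℝ) (y + (g₃ + ((z + ⟨z₁, hz⟩ : ↥H) : G n))))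
      (d₂ * d₃ / 4) (by rw [hf]; positivity) (fun _ => hind _ _) (fun _ => hind _ _) (by
        intro η hη
        have := hreg η hη
        unfold fCoeff at this
        simp only [chi_zero_right, mul_one] at this
        rw [abs_div, abs_of_pos hk, ← mul_div_assoc, div_le_div_iff_of_pos_right hk] at this
        exact this)
    rw [hf, ← card_inter_coset, ← card_inter_coset, ← Nat.card_eq_fintype_card] at this
    exact this
  have hSsum : ∑ z, S z = Nat.card ↥H' * ∑ y : ↥H, ∑ x : ↥H',
      Set.indicator A (1 : G n → ℝ) (x + (g₁ + z₁)) *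
      Set.indicator B (1 : G n → ℝ) (y + g₂) *
      Set.indicator C (1 : G n → ℝ) (x + y + (g₃ + z₁)) := by
    have e1 : ∑ z, S z = ∑ h : ↥H', ∑ z : ↥H, ∑ x : ↥H',
        Set.indicator A (1 : G n → ℝ) (x + (g₁ + z₁)) *
        Set.indicator B (1 : G n → ℝ) (h + (g₂ + z)) *
        Set.indicator C (1 : G n → ℝ) ((x + h : ↥H') + (g₃ + ((z + ⟨z₁, hz⟩ : ↥H) : G n))) := by
      symm
      rw [Finset.sum_comm]
      refine Finset.sum_congr rfl fun z _ => ?_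
      rw [hSd]
      exact Finset.sum_comm
    rw [e1]
    have e2 : ∀ h : ↥H', ∑ z : ↥H, ∑ x : ↥H',
        Set.indicator A (1 : G n → ℝ) (x + (g₁ + z₁)) *
        Set.indicator B (1 : G n → ℝ) (h + (g₂ + z)) *
        Set.indicator C (1 : G n → ℝ) ((x + h : ↥H') + (g₃ + ((z + ⟨z₁, hz⟩ : ↥H) : G n)))
        = ∑ y : ↥H, ∑ x : ↥H',
      Set.indicator A (1 : G n → ℝ) (x + (g₁ + z₁)) *
      Set.indicator B (1 : G n → ℝ) (y + g₂) *
      Set.indicator C (1 : G n → ℝ) (x + y + (g₃ + z₁)) := by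
      intro h
      symm
      rw [← Equiv.sum_comp (Equiv.addLeft (⟨h, hle h.2⟩ : ↥H))]
      refine Finset.sum_congr rfl fun z _ => Finset.sum_congr rfl fun x _ => ?_
      congr 2
      · congr 1
        simp only [Equiv.coe_addLeft, AddSubgroup.coe_add]; abel_nf
      · simp only [Equiv.coe_addLeft, AddSubgroup.coe_add]; abel_nf
    simp only [e2]
    simp
  have hPQ : ∑ z, (9 / 16 * (d₂ * d₃) * (Nat.card ↥H' : ℝ) ^ 2 *
      (1 - (if P z ≤ 3 / 4 * d₂ * (Nat.card ↥H' : ℝ) then (1 : ℝ) else 0)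
        - (if Q z ≤ 3 / 4 * d₃ * (Nat.card ↥H' : ℝ) then (1 : ℝ) else 0))) ≤ ∑ z, P z * Q z := by
    refine Finset.sum_le_sum fun z _ => ?_
    have hP0 : 0 ≤ P z := by positivity
    have hQ0 : 0 ≤ Q z := by positivity
    have hPQ0 : 0 ≤ P z * Q z := by positivity
    have hc : 0 ≤ 9 / 16 * (d₂ * d₃) * (Nat.card ↥H' : ℝ) ^ 2 := by positivity
    split_ifs with ha hb hb
    · linarith
    · linarith
    · linarith
    · have := mul_le_mul (not_le.mp ha).le (not_le.mp hb).le (by positivity) hP0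
      linarith
  rw [← Finset.mul_sum, Finset.sum_sub_distrib, Finset.sum_sub_distrib] at hPQ
  have hone : ∑ z : ↥H, (1 : ℝ) = Nat.card ↥H := by simp
  rw [hone] at hPQ
  have hsum := Finset.sum_le_sum (fun z (_ : z ∈ Finset.univ) => hloc z)
  rw [Finset.sum_sub_distrib, ← Finset.mul_sum (f := S), hSsum] at hsum
  simp only [mul_assoc (d₁ * (Nat.card ↥H' : ℝ)), ← Finset.mul_sum, Finset.sum_const,
    Finset.card_univ, nsmul_eq_mul, ← Nat.card_eq_fintype_card] at hsum
  generalize (triBetween (A ∩ coset H' (g₁ + z₁)) (B ∩ coset H g₂) (C ∩ coset H g₃) : ℝ) = T at *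
  set T' := ∑ y : ↥H, ∑ x : ↥H',
      Set.indicator A (1 : G n → ℝ) (x + (g₁ + z₁)) *
      Set.indicator B (1 : G n → ℝ) (y + g₂) *
      Set.indicator C (1 : G n → ℝ) (x + y + (g₃ + z₁))
  generalize (Nat.card ↥H' : ℝ) = k at *
  generalize (Nat.card ↥H : ℝ) = N at *
  have q1 : 9 / 16 * (d₂ * d₃) * k ^ 2 * (9 / 10 * N) ≤ ∑ z, P z * Q z := by
    refine le_trans (mul_le_mul_of_nonneg_left ?_ (by positivity)) hPQ
    linarith
  have q2 := mul_le_mul_of_nonneg_left q1 (show 0 ≤ d₁ * k by positivity)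
  have q3 : k ^ 2 * (1 / 4 * (d₁ * d₂ * d₃) * N * k) ≤ k ^ 2 * T' := by
    have : 0 ≤ d₁ * d₂ * d₃ * N * k ^ 3 := by positivity
    nlinarith
  exact (le_of_mul_le_mul_left q3 (by positivity)).trans hT
end
end
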